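/- arXiv:1307.5408 — 2 statements merged into one kernel-verified Lean document; each statement's English description precedes it below -/
import Mathlib

section
/- Let K be an algebraically closed field of characteristic 0, let W ⊆ (Kˣ)ⁿ be an irreducible variety defined over ℚ, let M be an integer k×n matrix of rank k, let T = {y ∈ (Kˣ)ⁿ : y^M = 1} be the corresponding subtorus, and let W_M ⊆ (Kˣ)ᵏ be the Zariski closure of {y^M : y ∈ W}. Then for every point b ∈ W that is generic in W over ℚ (i.e., trdeg(ℚ(b)/ℚ) = dim W), one has dim(W ∩ b·T) = dim W − dim W_M; moreover dim(W ∩ b·T) = trdeg(ℚ(b)/ℚ(b^M)). -/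
namespace BadFields

variable (K : Type) [Field K]

/-- The divisible hull `⟨A⟩` of a subset `A ⊆ Kˣ`: all `x` with `x ^ k` in the subgroup
generated by `A` for some `k ≥ 1`.  Note that `⟨∅⟩` is exactly the group of roots of unity. -/
def divHull (A : Set Kˣ) : Subgroup Kˣ where
  carrier := {x | ∃ k : ℕ, k ≠ 0 ∧ x ^ k ∈ Subgroup.closure A}
  one_mem' := ⟨1, one_ne_zero, by simpa using Subgroup.one_mem _⟩
  mul_mem' := by
    rintro x y ⟨k, hk, hx⟩ ⟨l, hl, hy⟩
    refine ⟨k * l, mul_ne_zero hk hl, ?_⟩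
    rw [mul_pow]
    exact Subgroup.mul_mem _ (by rw [pow_mul]; exact Subgroup.pow_mem _ hx l)
      (by rw [mul_comm k l, pow_mul]; exact Subgroup.pow_mem _ hy k)
  inv_mem' := by
    rintro x ⟨k, hk, hx⟩
    exact ⟨k, hk, by rw [inv_pow]; exact Subgroup.inv_mem _ hx⟩

/-- A subgroup `U` of `Kˣ` is divisible if every element has `k`-th roots in `U` for all
`k ≥ 1`. -/
def DivisibleSub (U : Subgroup Kˣ) : Prop :=
  ∀ u ∈ U, ∀ k : ℕ, k ≠ 0 → ∃ v ∈ U, v ^ k = u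

/-- The lattice of multiplicative relations of the tuple `y` modulo the divisible hull of `A`.
Since `Kˣ/⟨A⟩` is torsion-free, this lattice is saturated, and the dimension of the
`ℚ`-subspace of `Kˣ/Tor` spanned by (the images of) `y` over (the image of) `A` equals
`n` minus the rank of this lattice. -/
def relLattice (A : Set Kˣ) {n : ℕ} (y : Fin n → Kˣ) : Submodule ℤ (Fin n → ℤ) where
  carrier := {c | (∏ i, y i ^ c i) ∈ divHull K A}
  zero_mem' := by simpa using Subgroup.one_mem _
  add_mem' := by
    intro c d hc hd
    have h : (∏ i, y i ^ (c + d) i) = (∏ i, y i ^ c i) * ∏ i, y i ^ d i := by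
      rw [← Finset.prod_mul_distrib]
      exact Finset.prod_congr rfl fun i _ => by rw [Pi.add_apply, zpow_add]
    show (∏ i, y i ^ (c + d) i) ∈ divHull K A
    rw [h]
    exact Subgroup.mul_mem _ hc hd
  smul_mem' := by
    intro m c hc
    have h : (∏ i, y i ^ (m • c) i) = (∏ i, y i ^ c i) ^ m := by
      rw [← Finset.prod_zpow]
      exact Finset.prod_congr rfl fun i _ => by
        rw [Pi.smul_apply, smul_eq_mul, mul_comm, zpow_mul]
    show (∏ i, y i ^ (m • c) i) ∈ divHull K A
    rw [h]
    exact Subgroup.zpow_mem _ hc m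

/-- `ldimRel K A y` is the linear dimension `ldim(y/A)`: the dimension of the `ℚ`-subspace
spanned by the images of the coordinates of `y` in `Kˣ/Tor` over the subspace spanned by the
image of `A`. -/
noncomputable def ldimRel (A : Set Kˣ) {n : ℕ} (y : Fin n → Kˣ) : ℕ :=
  n - Module.finrank ℤ (relLattice K A y)

/-- The (absolute) linear dimension `ldim(y)`. -/
noncomputable def ldim {n : ℕ} (y : Fin n → Kˣ) : ℕ := ldimRel K ∅ y

/-- `trdegOver K F s` : the transcendence degree over the subfield `F` of the field generated
by `F` and the set `s`, i.e. the maximal cardinality of a finite subset of `s` which is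
algebraically independent over `F`. -/
noncomputable def trdegOver (F : Subfield K) (s : Set K) : ℕ :=
  sSup {d | ∃ t : Finset K, ↑t ⊆ s ∧ t.card = d ∧
    AlgebraicIndependent F (fun x : {y : K // y ∈ t} => (x : K))}

/-- Transcendence degree over the prime field; in characteristic zero this is
`trdeg(ℚ(s)/ℚ)`. -/
noncomputable def trdegQ (s : Set K) : ℕ := trdegOver K ⊥ s

section Var

variable {ι : Type} [Fintype ι]

/-- The subset of the torus `(Kˣ)^ι` cut out by a set of polynomials. -/
def zeroSet (S : Set (MvPolynomial ι K)) : Set (ι → Kˣ) :=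
  {x | ∀ p ∈ S, MvPolynomial.eval (fun i => (x i : K)) p = 0}

/-- Zariski closed subsets of the torus `(Kˣ)^ι` (closed subvarieties). -/
def IsZClosed (V : Set (ι → Kˣ)) : Prop := ∃ S, V = zeroSet K S

/-- Zariski closed subsets of `(Kˣ)^ι` defined by polynomials all of whose coefficients lie
in `E`; for `E = ↑(⊥ : Subfield K)` (the prime field, i.e. `ℚ` in characteristic `0`) this
means defined over `ℚ`. -/
def IsClosedOver (E : Set K) (V : Set (ι → Kˣ)) : Prop :=
  ∃ S : Set (MvPolynomial ι K),
    (∀ p ∈ S, ∀ m, MvPolynomial.coeff m p ∈ E) ∧ V = zeroSet K S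

/-- Irreducible (nonempty) Zariski closed subsets of the torus `(Kˣ)^ι`. -/
def IsIrredVar (V : Set (ι → Kˣ)) : Prop :=
  IsZClosed K V ∧ V.Nonempty ∧
    ∀ C₁ C₂ : Set (ι → Kˣ), IsZClosed K C₁ → IsZClosed K C₂ →
      V ⊆ C₁ ∪ C₂ → V ⊆ C₁ ∨ V ⊆ C₂

/-- The Zariski closure in `(Kˣ)^ι`. -/
def zcl (S : Set (ι → Kˣ)) : Set (ι → Kˣ) := ⋂₀ {C | IsZClosed K C ∧ S ⊆ C}

/-- The locus of a point `b` over the set of constants `E`: the smallest Zariski closed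
set containing `b` defined by polynomials with coefficients in `E`. -/
def locusOver (E : Set K) (b : ι → Kˣ) : Set (ι → Kˣ) :=
  ⋂₀ {C | IsClosedOver K E C ∧ b ∈ C}

/-- The dimension of a (not necessarily irreducible) Zariski closed subset of `(Kˣ)^ι`:
the supremum of the lengths of strict chains of irreducible closed subsets. -/
noncomputable def vdim (V : Set (ι → Kˣ)) : ℕ :=
  sSup {d | ∃ W : Fin (d + 1) → Set (ι → Kˣ),
    (∀ i, IsIrredVar K (W i) ∧ W i ⊆ V) ∧ StrictMono W}

/-- The monomial map `y ↦ y^M` attached to an integer matrix `M`. -/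
def mpow {k : ℕ} (M : Matrix (Fin k) ι ℤ) (y : ι → Kˣ) : Fin k → Kˣ :=
  fun j => ∏ i, y i ^ M j i

/-- Algebraic subgroups of the torus `(Kˣ)^ι`: subgroups defined by finitely many monomial
equations `y^M = 1`. -/
def IsAlgSubgroup (H : Set (ι → Kˣ)) : Prop :=
  ∃ (k : ℕ) (M : Matrix (Fin k) ι ℤ), H = {y | mpow K M y = 1}

/-- Subtori of `(Kˣ)^ι`: irreducible algebraic subgroups. -/
def IsSubtorus (T : Set (ι → Kˣ)) : Prop := IsAlgSubgroup K T ∧ IsIrredVar K T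

/-- The coset `c · T` (multiplication coordinatewise). -/
def coset (c : ι → Kˣ) (T : Set (ι → Kˣ)) : Set (ι → Kˣ) := (fun t => c * t) '' T

/-- A variety is free if it is not contained in a coset of a proper subtorus. -/
def IsFree (V : Set (ι → Kˣ)) : Prop :=
  ¬ ∃ T c, IsSubtorus K T ∧ T ≠ Set.univ ∧ V ⊆ coset K c T

/-- `T` is the minimal torus of `V`: the smallest subtorus such that `V` is contained in some
coset of it. -/
def IsMinTorus (V T : Set (ι → Kˣ)) : Prop :=
  IsSubtorus K T ∧ (∃ c, V ⊆ coset K c T) ∧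
    ∀ T', IsSubtorus K T' → (∃ c, V ⊆ coset K c T') → T ⊆ T'

/-- The codimension `cd(V) = dim(minimal torus of V) - dim V`. -/
noncomputable def cd (V : Set (ι → Kˣ)) : ℕ :=
  sInf {d | ∃ T c, IsSubtorus K T ∧ V ⊆ coset K c T ∧ d = vdim K T} - vdim K V

/-- `S` is cd-maximal in `W`. -/
def CdMaximal (S W : Set (ι → Kˣ)) : Prop :=
  IsIrredVar K S ∧ S ⊆ W ∧
    ∀ S', IsIrredVar K S' → S ⊂ S' → S' ⊆ W → cd K S < cd K S'

/-- `√[m]{V}`, the preimage of `V` under coordinatewise `m`-th powers. -/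
def mroot (m : ℕ) (V : Set (ι → Kˣ)) : Set (ι → Kˣ) := {a | (fun i => a i ^ m) ∈ V}

/-- An irreducible variety `V` is Kummer generic if `√[m]{V}` is irreducible for all `m ≥ 1`. -/
def KummerGeneric (V : Set (ι → Kˣ)) : Prop :=
  IsIrredVar K V ∧ ∀ m : ℕ, 1 ≤ m → IsIrredVar K (mroot K m V)

/-- Irreducible components of a set `S`: maximal irreducible closed subsets of `S`. -/
def IsIrredComponent (V' S : Set (ι → Kˣ)) : Prop :=
  IsIrredVar K V' ∧ V' ⊆ S ∧ ∀ W, IsIrredVar K W → V' ⊆ W → W ⊆ S → W = V'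

end Var

/-- A correspondence torus: an `n`-dimensional subtorus of `(Kˣ)ⁿ × (Kˣ)ⁿ` which projects
onto `(Kˣ)ⁿ` in both coordinates.  We identify `(Kˣ)ⁿ × (Kˣ)ⁿ` with `(Kˣ)^(Fin n ⊕ Fin n)`,
a pair `(x, y)` corresponding to `Sum.elim x y`. -/
def IsCorrTorus {n : ℕ} (T : Set ((Fin n ⊕ Fin n) → Kˣ)) : Prop :=
  IsSubtorus K T ∧ vdim K T = n ∧
    (∀ x : Fin n → Kˣ, ∃ y, Sum.elim x y ∈ T) ∧
    (∀ y : Fin n → Kˣ, ∃ x, Sum.elim x y ∈ T)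

/-- `T` induces a toric correspondence between `V` and `V'`: the Zariski closures of the two
projections of `(V × V') ∩ T` are `V` and `V'` respectively. -/
def ToricCorr {n : ℕ} (T : Set ((Fin n ⊕ Fin n) → Kˣ)) (V V' : Set (Fin n → Kˣ)) : Prop :=
  zcl K ((fun p => p ∘ Sum.inl) '' {p | p ∈ T ∧ (p ∘ Sum.inl) ∈ V ∧ (p ∘ Sum.inr) ∈ V'}) = V ∧
  zcl K ((fun p => p ∘ Sum.inr) '' {p | p ∈ T ∧ (p ∘ Sum.inl) ∈ V ∧ (p ∘ Sum.inr) ∈ V'}) = V'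

/-- The set of elements of `K` underlying a set of units. -/
def unitSet (A : Set Kˣ) : Set K := (fun u : Kˣ => (u : K)) '' A

/-- `trdeg(y/A)`, the transcendence degree of `ℚ(A ∪ y)` over `ℚ(A)`. -/
noncomputable def trdegRel (A : Set Kˣ) {n : ℕ} (y : Fin n → Kˣ) : ℕ :=
  trdegOver K (Subfield.closure (unitSet K A)) (Set.range fun i => (y i : K))

/-- The predimension `δ(y/A) = 2 trdeg(y/A) - ldim(y/A)`. -/
noncomputable def pdelta (A : Set Kˣ) {n : ℕ} (y : Fin n → Kˣ) : ℤ :=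
  2 * (trdegRel K A y : ℤ) - (ldimRel K A y : ℤ)

/-- The extension `⟨A ∪ b⟩/A` is minimal prealgebraic of length `n`. -/
def MinPrealg {n : ℕ} (A : Set Kˣ) (b : Fin n → Kˣ) : Prop :=
  2 ≤ n ∧ ldimRel K A b = n ∧ pdelta K A b = 0 ∧
    ∀ B' : Set Kˣ, B' = ↑(divHull K B') → A ⊂ B' → B' ⊂ ↑(divHull K (A ∪ Set.range b)) →
      pdelta K B' b < 0


/-! ### Rank of sets in the algebraic-independence matroid -/
section RankLemmas

open AlgebraicIndependent in
/-- transcendence rank of the set `s` over `F`. -/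
noncomputable def rk (F : Type*) {L : Type*} [Field F] [Field L] [Algebra F L] (s : Set L) : ℕ∞ :=
  (AlgebraicIndependent.matroid F L).eRk s

/-- relative algebraic closure of the field generated by `s`. -/
noncomputable def acl (F : Type*) {L : Type*} [Field F] [Field L] [Algebra F L] (s : Set L) :
    Subfield L where
  carrier := {x | IsAlgebraic (Algebra.adjoin F s) x}
  zero_mem' := isAlgebraic_zero
  one_mem' := isAlgebraic_one
  add_mem' := fun hx hy => hx.add hy
  mul_mem' := fun hx hy => hx.mul hy
  neg_mem' := fun hx => hx.neg
  inv_mem' := fun _ hx => hx.inv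

variable {F E L : Type*} [Field F] [Field E] [Field L] [Algebra F L]

lemma mem_acl {s : Set L} {x : L} : x ∈ acl F s ↔ IsAlgebraic (Algebra.adjoin F s) x := Iff.rfl

lemma coe_acl (s : Set L) : (acl F s : Set L) = (AlgebraicIndependent.matroid F L).closure s := by
  rw [AlgebraicIndependent.matroid_closure_eq]
  ext x
  rfl

lemma adjoin_le_acl {s : Set L} {x : L} (hx : x ∈ Algebra.adjoin F s) : x ∈ acl F s :=
  isAlgebraic_algebraMap (⟨x, hx⟩ : Algebra.adjoin F s)

lemma subset_acl (s : Set L) : s ⊆ acl F s := fun _ hx =>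
  adjoin_le_acl (Algebra.subset_adjoin hx)

lemma algebraMap_mem_acl (s : Set L) (x : F) : algebraMap F L x ∈ acl F s :=
  adjoin_le_acl (Subalgebra.algebraMap_mem _ x)

lemma isAlgebraic_mono {S T : Type*} [SetLike S L] [SubringClass S L] [SetLike T L]
    [SubringClass T L] {A : S} {B : T} (h : ∀ x ∈ A, x ∈ B) {x : L}
    (hx : IsAlgebraic A x) : IsAlgebraic B x := by
  obtain ⟨p, hp, hpx⟩ := hx
  let f : A →+* B :=
    { toFun := fun y => ⟨y, h y y.2⟩
      map_one' := rfl
      map_zero' := rfl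
      map_add' := fun _ _ => rfl
      map_mul' := fun _ _ => rfl }
  have hf : Function.Injective f := fun a b hab => Subtype.ext (congrArg (fun z : B => (z : L)) hab)
  refine ⟨p.map f, (Polynomial.map_ne_zero_iff hf).2 hp, ?_⟩
  rw [Polynomial.aeval_def, Polynomial.eval₂_map]
  exact hpx

lemma mem_acl_of_isAlgebraic {s : Set L} {x : L} (hx : IsAlgebraic (acl F s) x) :
    x ∈ acl F s := by
  rw [mem_acl]
  have : IsAlgebraic (Subalgebra.algebraicClosure (Algebra.adjoin F s) L) x :=
    isAlgebraic_mono (fun y hy => hy) hx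
  exact this.restrictScalars (Algebra.adjoin F s)

lemma rk_mono {s t : Set L} (h : s ⊆ t) : rk F s ≤ rk F t := Matroid.eRk_mono _ h

lemma rk_le_of_subset_acl {s t : Set L} (h : s ⊆ acl F t) : rk F s ≤ rk F t := by
  rw [coe_acl] at h
  exact (Matroid.eRk_mono _ h).trans_eq (Matroid.eRk_closure_eq _ _)

lemma rk_le_encard (s : Set L) : rk F s ≤ s.encard := Matroid.eRk_le_encard _ _

lemma rk_union_le (s t : Set L) : rk F (s ∪ t) ≤ rk F s + rk F t :=
  Matroid.eRk_union_le_eRk_add_eRk _ _ _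

lemma exists_basis (s : Set L) : ∃ t ⊆ s, AlgebraicIndependent F (fun x : t => (x : L)) ∧
    t.encard = rk F s ∧ s ⊆ acl F t := by
  obtain ⟨t, ht⟩ := (AlgebraicIndependent.matroid F L).exists_isBasis s
  refine ⟨t, ht.subset, ht.indep, ht.encard_eq_eRk, ?_⟩
  rw [coe_acl]
  exact ht.subset_closure

lemma encard_le_rk {s t : Set L} (ht : AlgebraicIndependent F (fun x : t => (x : L)))
    (h : t ⊆ s) : t.encard ≤ rk F s :=
  Matroid.Indep.encard_le_eRk_of_subset (M := AlgebraicIndependent.matroid F L) ht h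

lemma card_le_rk {κ : Type*} {v : κ → L} {s : Set L} (hv : AlgebraicIndependent F v)
    (h : Set.range v ⊆ s) : ENat.card κ ≤ rk F s := by
  have h1 := encard_le_rk hv.coe_range h
  rwa [← Set.image_univ, hv.injective.encard_image, Set.encard_univ] at h1

lemma rk_le_of_tower [Algebra F E] [Algebra E L] [IsScalarTower F E L] (s : Set L) :
    rk E s ≤ rk F s := by
  obtain ⟨t, hts, ht, hc, -⟩ := exists_basis (F := E) s
  rw [← hc]
  exact encard_le_rk (ht.restrictScalars (algebraMap F E).injective) hts

lemma rk_add_upper [Algebra F E] [Algebra E L] [IsScalarTower F E L] {c s : Set L}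
    (hE : ∀ x : E, algebraMap E L x ∈ acl F c) : rk F s ≤ rk F c + rk E s := by
  obtain ⟨u, hus, hu, hcard, hsp⟩ := exists_basis (F := E) s
  have hmono : ∀ x ∈ acl F c, x ∈ acl F (c ∪ u) := fun x hx =>
    isAlgebraic_mono (fun y hy => Algebra.adjoin_mono Set.subset_union_left hy) (mem_acl.1 hx)
  have hadj : ∀ y ∈ Algebra.adjoin E u, y ∈ acl F (c ∪ u) := by
    intro y hy
    induction hy using Algebra.adjoin_induction with
    | mem x hx => exact subset_acl _ (Or.inr hx)
    | algebraMap r => exact hmono _ (hE r)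
    | add x y _ _ hx hy => exact add_mem hx hy
    | mul x y _ _ hx hy => exact mul_mem hx hy
  have h1 : s ⊆ acl F (c ∪ u) := fun x hx =>
    mem_acl_of_isAlgebraic (isAlgebraic_mono hadj (mem_acl.1 (hsp hx)))
  calc rk F s ≤ rk F (c ∪ u) := rk_le_of_subset_acl h1
    _ ≤ rk F c + rk F u := rk_union_le _ _
    _ ≤ rk F c + rk E s := by
      gcongr
      rw [← hcard]
      exact rk_le_encard u

lemma rk_add_lower [Algebra F E] [Algebra E L] [IsScalarTower F E L] {c s : Set L}
    (hcE : c ⊆ Set.range (algebraMap E L)) (hcs : c ⊆ acl F s) :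
    rk F c + rk E s ≤ rk F s := by
  obtain ⟨u, hus, hu, hucard, -⟩ := exists_basis (F := E) s
  obtain ⟨t, htc, ht, htcard, -⟩ := exists_basis (F := F) c
  have h := ht.sumElim_of_tower (S := E) (y := fun x : u => (x : L))
    (by simpa using htc.trans hcE) hu
  have h2 := card_le_rk (s := s ∪ c) h (by
    rintro _ ⟨x | x, rfl⟩
    · exact Or.inl (hus x.2)
    · exact Or.inr (htc x.2))
  have h3 : rk F (s ∪ c) ≤ rk F s := rk_le_of_subset_acl (Set.union_subset (subset_acl _) hcs)
  rw [← htcard, ← hucard]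
  refine le_trans (le_of_eq ?_) (h2.trans h3)
  simp [add_comm]

end RankLemmas

/-! ### Specializations -/
section Specialization

variable {F L L' : Type*} [Field F] [Field L] [Field L'] [Algebra F L] [Algebra F L']
variable {ι : Type*}

lemma exists_indep_lift {a : ι → L} {a' : ι → L'}
    (h : ∀ p : MvPolynomial ι F, MvPolynomial.aeval a' p = 0 → MvPolynomial.aeval a p = 0) :
    ∃ (t : Set L) (J : t → ι), t.encard = rk F (Set.range a) ∧ 
      AlgebraicIndependent F (a ∘ J) ∧ AlgebraicIndependent F (a' ∘ J) := by
  obtain ⟨t, hts, ht, hcard, -⟩ := exists_basis (F := F) (Set.range a)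
  choose J hJ using fun x : t => hts x.2
  have haJ : a ∘ J = fun x : t => (x : L) := funext hJ
  rw [← haJ] at ht
  refine ⟨t, J, hcard, ht, ?_⟩
  rw [algebraicIndependent_iff] at ht ⊢
  intro p hp
  refine ht p ?_
  have := h (MvPolynomial.rename J p) (by rwa [MvPolynomial.aeval_rename])
  rwa [MvPolynomial.aeval_rename] at this

lemma rk_specialize {a : ι → L} {a' : ι → L'}
    (h : ∀ p : MvPolynomial ι F, MvPolynomial.aeval a' p = 0 → MvPolynomial.aeval a p = 0) :
    rk F (Set.range a) ≤ rk F (Set.range a') := by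
  obtain ⟨t, J, hcard, -, ht⟩ := exists_indep_lift h
  rw [← hcard]
  exact card_le_rk ht (Set.range_comp_subset_range _ _)

lemma rk_range_le_card [Finite ι] (a : ι → L) : rk F (Set.range a) ≤ Nat.card ι := by
  refine (rk_le_encard _).trans ?_
  rw [← Set.image_univ]
  refine (Set.encard_image_le _ _).trans ?_
  rw [Set.encard_univ]
  exact (ENat.card_eq_coe_natCard ι).le

/-- The evaluation of a polynomial lies in the relative algebraic closure. -/
lemma aeval_mem_acl {s : Set L} {a : ι → L} (h : ∀ i, a i ∈ acl F s) (p : MvPolynomial ι F) :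
    MvPolynomial.aeval a p ∈ acl F s := by
  induction p using MvPolynomial.induction_on with
  | C r => simpa using algebraMap_mem_acl _ r
  | add p q hp hq => rw [map_add]; exact add_mem hp hq
  | mul_X p i hp => rw [map_mul, MvPolynomial.aeval_X]; exact mul_mem hp (h i)

lemma rk_specialize_lt [Finite ι] {a : ι → L} {a' : ι → L'}
    (h : ∀ p : MvPolynomial ι F, MvPolynomial.aeval a' p = 0 → MvPolynomial.aeval a p = 0)
    (p₀ : MvPolynomial ι F) (h₀ : MvPolynomial.aeval a p₀ = 0)
    (h₀' : MvPolynomial.aeval a' p₀ ≠ 0) :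
    rk F (Set.range a) < rk F (Set.range a') := by
  obtain ⟨t, J, hcard, ht, ht'⟩ := exists_indep_lift h
  by_contra hcon
  rw [not_lt] at hcon
  have hJfin : (Set.range (a' ∘ J)).Finite :=
    (Set.finite_range a').subset (Set.range_comp_subset_range _ _)
  have hJcard : (Set.range (a' ∘ J)).encard = t.encard := by
    rw [← Set.image_univ, ht'.injective.encard_image, Set.encard_univ]
    rfl
  have hind : (AlgebraicIndependent.matroid F L').Indep (Set.range (a' ∘ J)) := ht'.coe_range
  have hbasis := hind.isBasis_of_eRk_ge hJfin (Set.range_comp_subset_range J a')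
    (hcon.trans (by rw [← hcard, ← hJcard, hind.eRk_eq_encard]))
  have hsub : Set.range a' ⊆ acl F (Set.range (a' ∘ J)) := by
    rw [coe_acl]; exact hbasis.subset_closure
  have hmem : MvPolynomial.aeval a' p₀ ∈ acl F (Set.range (a' ∘ J)) :=
    aeval_mem_acl (fun i => hsub ⟨i, rfl⟩) p₀
  obtain ⟨q, hq0, hq⟩ := (mem_acl.1 hmem).exists_nonzero_coeff_and_aeval_eq_zero
    (mem_nonZeroDivisors_of_ne_zero h₀')
  let e := ht'.repr
  let P : MvPolynomial ι F := q.eval₂ ((MvPolynomial.rename J).toRingHom.comp e.toRingHom) p₀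
  have hP' : MvPolynomial.aeval a' P = 0 := by
    rw [← hq, Polynomial.aeval_def]
    change (MvPolynomial.aeval a').toRingHom _ = _
    rw [Polynomial.hom_eval₂]
    congr 1
    ext x
    simp [MvPolynomial.aeval_rename, e]
  have hP : MvPolynomial.aeval a P = 0 := h P hP'
  change (MvPolynomial.aeval a).toRingHom _ = _ at hP
  rw [Polynomial.hom_eval₂] at hP
  change Polynomial.eval₂ _ (MvPolynomial.aeval a p₀) q = 0 at hP
  rw [h₀, Polynomial.eval₂_at_zero] at hP
  simp only [RingHom.comp_apply, AlgHom.toRingHom_eq_coe, RingHom.coe_coe, 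
    MvPolynomial.aeval_rename] at hP
  have h3 := (algebraicIndependent_iff.1 ht) _ hP
  apply hq0
  have h4 := ht'.aeval_repr (q.coeff 0)
  rw [show ht'.repr (q.coeff 0) = 0 from h3, map_zero] at h4
  exact Subtype.ext h4.symm

end Specialization

section Extension

lemma isAlgebraic_transfer {A B L : Type*} [CommRing A] [CommRing B] [CommRing L]
    [Algebra A L] [Algebra B L] (f : A →+* B) (hf : Function.Injective f)
    (h : ∀ x, algebraMap B L (f x) = algebraMap A L x) {x : L} (hx : IsAlgebraic A x) :
    IsAlgebraic B x := by
  obtain ⟨p, hp, hpx⟩ := hx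
  refine ⟨p.map f, (Polynomial.map_ne_zero_iff hf).2 hp, ?_⟩
  rw [Polynomial.aeval_def, Polynomial.eval₂_map, ← hpx, Polynomial.aeval_def]
  congr 1
  ext x
  exact h x

lemma isAlgebraic_mvPolynomial {F K B : Type} [Field F] [Field K] [Algebra F K] {v : B → K}
    (hB : IsTranscendenceBasis F v) [Algebra (MvPolynomial B F) K]
    (h : ∀ r : MvPolynomial B F, algebraMap (MvPolynomial B F) K r = MvPolynomial.aeval v r) :
    Algebra.IsAlgebraic (MvPolynomial B F) K := by
  have := hB.isAlgebraic
  refine ⟨fun x => ?_⟩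
  exact isAlgebraic_transfer (A := Algebra.adjoin F (Set.range v)) hB.1.repr.toRingHom
    hB.1.aevalEquiv.symm.injective
    (fun y => (h _).trans (hB.1.aeval_repr y)) (this.isAlgebraic x)

lemma isTorsionFree_of_injective {R K : Type*} [CommRing R] [IsDomain R] [Field K] [Algebra R K]
    (h : Function.Injective (algebraMap R K)) : Module.IsTorsionFree R K :=
  Module.isTorsionFree_iff_algebraMap_injective.2 h

lemma exists_lift_hom {F K L B : Type} [Field F] [Field K] [Algebra F K] [Field L] [IsAlgClosed L]
    {v : B → K} (hB : IsTranscendenceBasis F v) (g : MvPolynomial B F →+* L)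
    (hg : Function.Injective g) :
    ∃ φ : K →+* L, ∀ r, φ (MvPolynomial.aeval v r) = g r := by
  let _ : Algebra (MvPolynomial B F) K :=
    (MvPolynomial.aeval v : MvPolynomial B F →ₐ[F] K).toRingHom.toAlgebra
  let _ : Algebra (MvPolynomial B F) L := g.toAlgebra
  have : Module.IsTorsionFree (MvPolynomial B F) K := isTorsionFree_of_injective hB.1
  have : Module.IsTorsionFree (MvPolynomial B F) L := isTorsionFree_of_injective hg
  have : Algebra.IsAlgebraic (MvPolynomial B F) K := isAlgebraic_mvPolynomial hB (fun _ => rfl)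
  let φ : K →ₐ[MvPolynomial B F] L := IsAlgClosed.lift
  exact ⟨φ.toRingHom, fun r => φ.commutes r⟩

lemma exists_big_field (K B : Type) [Field K] : ∃ (L : Type) (_ : Field L) (_ : IsAlgClosed L)
    (_ : Algebra K L) (g : MvPolynomial B K →ₐ[K] L), Function.Injective g := by
  let Q := FractionRing (MvPolynomial B K)
  refine ⟨AlgebraicClosure Q, inferInstance, inferInstance, inferInstance,
    (IsScalarTower.toAlgHom K Q (AlgebraicClosure Q)).comp
      (IsScalarTower.toAlgHom K (MvPolynomial B K) Q), ?_⟩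
  exact (algebraMap Q (AlgebraicClosure Q)).injective.comp
    (IsFractionRing.injective (MvPolynomial B K) Q)

/-- A free second copy of `K` over `F`, in an extension of `K`. -/
lemma exists_free_copy {F K : Type} [Field F] [Field K] [Algebra F K] (t : Set K)
    (ht : AlgebraicIndependent F (fun x : t => (x : K))) :
    ∃ (L : Type) (_ : Field L) (_ : Algebra K L) (φ : K →+* L),
      (∀ x : F, φ (algebraMap F K x) = algebraMap K L (algebraMap F K x)) ∧
      AlgebraicIndependent K (fun x : t => φ x) := by
  obtain ⟨B, htB, hB⟩ := exists_isTranscendenceBasis_superset ht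
  obtain ⟨L, _, _, _, g₀, hg₀⟩ := exists_big_field K B
  obtain ⟨φ, hφ⟩ := exists_lift_hom hB (g₀.toRingHom.comp (MvPolynomial.map (algebraMap F K)))
    (hg₀.comp (MvPolynomial.map_injective _ (algebraMap F K).injective))
  refine ⟨L, inferInstance, inferInstance, φ, ?_, ?_⟩
  · intro x
    have := hφ (MvPolynomial.C x)
    simp only [MvPolynomial.aeval_C, RingHom.comp_apply, MvPolynomial.map_C] at this
    refine this.trans ?_
    exact g₀.commutes _
  · have hX : ∀ x : B, φ x = g₀ (MvPolynomial.X x) := by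
      intro x
      have := hφ (MvPolynomial.X x)
      simpa using this
    have h1 : AlgebraicIndependent K (fun x : B => φ x) := by
      have h2 : (fun x : B => φ x) = g₀ ∘ MvPolynomial.X := funext hX
      rw [h2]
      exact (MvPolynomial.algebraicIndependent_X B K).map' hg₀
    exact h1.comp (Set.inclusion htB) (Set.inclusion_injective htB)

lemma rk_image_le {F K L : Type*} [Field F] [Field K] [Field L] [Algebra F K] [Algebra K L]
    (φ : K →+* L) (hφ : ∀ x : F, φ (algebraMap F K x) = algebraMap K L (algebraMap F K x))
    (s : Set K) : rk K (φ '' s) ≤ rk F s := by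
  obtain ⟨t, hts, ht, hcard, -⟩ := exists_basis (F := K) (φ '' s)
  choose J hJs hJ using fun x : t => hts x.2
  have h1 : φ ∘ J = fun x : t => (x : L) := funext hJ
  rw [← h1] at ht
  have h2 : AlgebraicIndependent F J :=
    ht.of_ringHom_of_comp_eq (algebraMap F K) φ (algebraMap F K).injective
      (RingHom.ext fun x => (hφ x).symm)
  rw [← hcard]
  exact card_le_rk h2 (Set.range_subset_iff.2 hJs)

lemma exists_free_copy_rk {F K : Type} [Field F] [Field K] [Algebra F K] (s₀ s₁ : Set K)
    (h : s₀ ⊆ s₁) :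
    ∃ (L : Type) (_ : Field L) (_ : Algebra K L) (φ : K →+* L),
      (∀ x : F, φ (algebraMap F K x) = algebraMap K L (algebraMap F K x)) ∧
      rk K (φ '' s₀) = rk F s₀ ∧ rk K (φ '' s₁) = rk F s₁ := by
  obtain ⟨t₀, ht₀⟩ := (AlgebraicIndependent.matroid F K).exists_isBasis s₀
  obtain ⟨t₁, ht₁, ht⟩ := ht₀.indep.subset_isBasis_of_subset (ht₀.subset.trans h)
  obtain ⟨L, _, _, φ, hφ, hind⟩ := exists_free_copy t₁ ht₁.indep
  refine ⟨L, inferInstance, inferInstance, φ, hφ, (rk_image_le φ hφ s₀).antisymm ?_, (rk_image_le φ hφ s₁).antisymm ?_⟩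
  · refine (ht₀.encard_eq_eRk.symm.le).trans ?_
    exact card_le_rk (hind.comp (Set.inclusion ht) (Set.inclusion_injective ht)) (by
      rintro _ ⟨x, rfl⟩
      exact ⟨x, ht₀.subset x.2, rfl⟩)
  · refine (ht₁.encard_eq_eRk.symm.le).trans ?_
    exact card_le_rk hind (by
      rintro _ ⟨x, rfl⟩
      exact ⟨x, ht₁.subset x.2, rfl⟩)

end Extension

section Drop

lemma rk_eq_zero_of_isAlgebraic {E L : Type*} [Field E] [Field L] [Algebra E L]
    [Algebra.IsAlgebraic E L] (s : Set L) : rk E s = 0 := by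
  have h : s ⊆ acl E (∅ : Set L) := fun x _ =>
    mem_acl.2 ((Algebra.IsAlgebraic.isAlgebraic (R := E) x).extendScalars
      (FaithfulSMul.algebraMap_injective E _))
  have h1 := rk_le_of_subset_acl h
  have h2 := rk_le_encard (F := E) (∅ : Set L)
  simpa using h1.trans h2

/-- Specializing a point so that the transcendence degree drops by exactly one. -/
lemma exists_drop {K L : Type} [Field K] [Field L] [Algebra K L] {ι : Type} [Finite ι]
    (a : ι → L) (ha : ∀ i, a i ≠ 0) (d : ℕ) (hd : rk K (Set.range a) = (d + 1 : ℕ)) :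
    ∃ (L' : Type) (_ : Field L') (_ : Algebra K L') (a' : ι → L'),
      (∀ i, a' i ≠ 0) ∧
      (∀ p : MvPolynomial ι K, MvPolynomial.aeval a p = 0 → MvPolynomial.aeval a' p = 0) ∧
      rk K (Set.range a') = d := by
  obtain ⟨t, hts, ht, hcard, -⟩ := exists_basis (F := K) (Set.range a)
  rw [hd] at hcard
  obtain ⟨x, hx⟩ : t.Nonempty := by
    rw [← Set.encard_pos, hcard]
    exact_mod_cast Nat.succ_pos d
  have hcard' : (t \ {x}).encard = d := by
    have := Set.encard_sdiff_singleton_add_one hx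
    rw [hcard] at this
    push_cast at this
    exact (ENat.add_left_injective_of_ne_top ENat.one_ne_top) this
  set t' := t \ {x} with ht'
  let E := IntermediateField.adjoin K t'
  let A := Algebra.adjoin E (Set.range a ∪ Set.range (fun i => (a i)⁻¹))
  have hmemA : ∀ i, a i ∈ A := fun i => Algebra.subset_adjoin (Or.inl ⟨i, rfl⟩)
  have hmemA' : ∀ i, (a i)⁻¹ ∈ A := fun i => Algebra.subset_adjoin (Or.inr ⟨i, rfl⟩)
  have hfin : Algebra.FiniteType E A := by
    rw [← Subalgebra.fg_iff_finiteType]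
    exact Subalgebra.fg_def.2 ⟨_, (Set.finite_range _).union (Set.finite_range _), rfl⟩
  obtain ⟨m, hm⟩ := Ideal.exists_maximal A
  let L' := A ⧸ m
  let _ : Field L' := Ideal.Quotient.field m
  have hfin' : Module.Finite E L' := by
    have : Algebra.FiniteType E L' :=
      Algebra.FiniteType.of_surjective (Ideal.Quotient.mkₐ E m) (Ideal.Quotient.mkₐ_surjective E m)
    exact finite_of_finite_type_of_isJacobsonRing E L'
  have halg : Algebra.IsAlgebraic E L' := Algebra.IsAlgebraic.of_finite E L'
  let π : A →ₐ[K] L' := Ideal.Quotient.mkₐ K m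
  let aA : ι → A := fun i => ⟨a i, hmemA i⟩
  let a' : ι → L' := fun i => π (aA i)
  have hE : ∀ y ∈ t', y ∈ E := fun y hy => IntermediateField.subset_adjoin K t' hy
  let vE : t' → E := fun y => ⟨y, hE y y.2⟩
  have hvE : AlgebraicIndependent K vE := by
    have h1 : AlgebraicIndependent K (fun y : t' => (y : L)) :=
      ht.comp (Set.inclusion Set.sdiff_subset) (Set.inclusion_injective _)
    exact AlgebraicIndependent.of_comp E.val h1
  let v : t' → L' := fun y => algebraMap E L' (vE y)
  have hv : AlgebraicIndependent K v :=
    hvE.map' (f := IsScalarTower.toAlgHom K E L') (algebraMap E L').injective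
  have hva : Set.range v ⊆ Set.range a' := by
    rintro _ ⟨y, rfl⟩
    obtain ⟨i, hi⟩ := hts y.2.1
    refine ⟨i, ?_⟩
    change Ideal.Quotient.mk m _ = Ideal.Quotient.mk m _
    congr 1
    exact Subtype.ext hi
  have hEacl : ∀ e : E, algebraMap E L' e ∈ acl K (Set.range v) := by
    rintro ⟨e, he⟩
    induction he using IntermediateField.adjoin_induction with
    | mem y hy => exact subset_acl _ ⟨⟨y, hy⟩, rfl⟩
    | algebraMap r => exact algebraMap_mem_acl _ r
    | add y z hy hz h1 h2 => exact add_mem h1 h2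
    | mul y z hy hz h1 h2 => exact mul_mem h1 h2
    | inv y hy h1 =>
      have := inv_mem h1
      rwa [← map_inv₀] at this
  have hcardv : ENat.card t' = d := hcard'
  refine ⟨L', inferInstance, inferInstance, a', ?_, ?_, le_antisymm ?_ ?_⟩
  · intro i h0
    have h1 : aA i * ⟨(a i)⁻¹, hmemA' i⟩ = 1 := Subtype.ext (mul_inv_cancel₀ (ha i))
    have h2 := congrArg π h1
    rw [map_mul, map_one] at h2
    rw [show π (aA i) = 0 from h0, zero_mul] at h2
    exact zero_ne_one h2
  · intro p hp
    have h1 : MvPolynomial.aeval a' p = π (MvPolynomial.aeval aA p) := by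
      change MvPolynomial.aeval (fun i => π (aA i)) p = _
      rw [MvPolynomial.comp_aeval_apply]
    have h2 : MvPolynomial.aeval aA p = 0 := by
      apply Subtype.ext
      have h3 : (A.val.restrictScalars K) (MvPolynomial.aeval aA p) = MvPolynomial.aeval a p := by
        rw [MvPolynomial.comp_aeval_apply]
        rfl
      exact h3.trans hp
    rw [h1, h2, map_zero]
  · have h1 := rk_add_upper (F := K) (E := E) (s := Set.range a') hEacl
    have h0 : rk E (Set.range a') = 0 := rk_eq_zero_of_isAlgebraic _
    rw [h0, add_zero] at h1
    refine h1.trans ((rk_le_encard _).trans ?_)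
    rw [← Set.image_univ]
    refine (Set.encard_image_le _ _).trans ?_
    rw [Set.encard_univ, hcardv]
  · rw [← hcardv]
    exact card_le_rk hv hva

end Drop

section Geometry

open MvPolynomial

/-- the closed set of `K`-specializations of the point `a`. -/
def loc {K L : Type} [Field K] [Field L] [Algebra K L] {ι : Type} (a : ι → L) : Set (ι → Kˣ) :=
  {x | ∀ p : MvPolynomial ι K, aeval a p = 0 → eval (fun i => (x i : K)) p = 0}

/-- `a` is a generic point of `V` over `K`. -/
def IsGen {K L : Type} [Field K] [Field L] [Algebra K L] {ι : Type} (V : Set (ι → Kˣ))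
    (a : ι → L) : Prop :=
  ∀ p : MvPolynomial ι K, aeval a p = 0 ↔ ∀ x ∈ V, eval (fun i => (x i : K)) p = 0

variable {K : Type} [Field K] {ι : Type} [Fintype ι]

lemma isZClosed_loc {L : Type} [Field L] [Algebra K L] (a : ι → L) :
    IsZClosed K (loc (K := K) a) := ⟨{p | aeval a p = 0}, rfl⟩

lemma IsGen.eq_loc {L : Type} [Field L] [Algebra K L] {a : ι → L} {V : Set (ι → Kˣ)}
    (h : IsGen V a) (hV : IsZClosed K V) : V = loc a := by
  obtain ⟨S, hS⟩ := hV
  apply Set.Subset.antisymm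
  · intro x hx p hp
    exact (h p).1 hp x hx
  · intro x hx
    rw [hS]
    intro p hp
    refine hx p ((h p).2 fun y hy => ?_)
    rw [hS] at hy
    exact hy p hp

lemma IsGen.irred {L : Type} [Field L] [Algebra K L] {a : ι → L} {V : Set (ι → Kˣ)}
    (h : IsGen V a) (hV : IsZClosed K V) : IsIrredVar K V := by
  refine ⟨hV, ?_, ?_⟩
  · by_contra hne
    rw [Set.not_nonempty_iff_eq_empty] at hne
    have := (h 1).2 (by simp [hne])
    simp at this
  · rintro C₁ C₂ ⟨S₁, rfl⟩ ⟨S₂, rfl⟩ hsub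
    by_contra hcon
    rw [not_or, Set.not_subset, Set.not_subset] at hcon
    obtain ⟨⟨x, hxV, hx⟩, ⟨y, hyV, hy⟩⟩ := hcon
    simp only [zeroSet, Set.mem_ofPred_eq, not_forall] at hx hy
    obtain ⟨p, hp, hpx⟩ := hx
    obtain ⟨q, hq, hqy⟩ := hy
    have h1 : aeval a (p * q) = 0 := (h _).2 fun z hz => by
      rcases hsub hz with h1 | h1
      · rw [map_mul, h1 p hp, zero_mul]
      · rw [map_mul, h1 q hq, mul_zero]
    rw [map_mul, mul_eq_zero] at h1
    rcases h1 with h1 | h1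
    · exact hpx ((h p).1 h1 x hxV)
    · exact hqy ((h q).1 h1 y hyV)

lemma IsGen.ne_zero {L : Type} [Field L] [Algebra K L] {a : ι → L} {V : Set (ι → Kˣ)}
    (h : IsGen V a) (hV : V.Nonempty) (i : ι) : a i ≠ 0 := by
  intro h0
  obtain ⟨x, hx⟩ := hV
  have := (h (X i)).1 (by simpa using h0) x hx
  simp at this

lemma exists_isGen {V : Set (ι → Kˣ)} (hV : IsIrredVar K V) :
    ∃ (L : Type) (_ : Field L) (_ : Algebra K L) (a : ι → L), IsGen V a := by
  let P : Ideal (MvPolynomial ι K) :=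
    { carrier := {p | ∀ x ∈ V, eval (fun i => (x i : K)) p = 0}
      zero_mem' := fun x _ => map_zero _
      add_mem' := fun hp hq x hx => by rw [map_add, hp x hx, hq x hx, add_zero]
      smul_mem' := fun c p hp x hx => by rw [smul_eq_mul, map_mul, hp x hx, mul_zero] }
  have hPmem : ∀ p, p ∈ P ↔ ∀ x ∈ V, eval (fun i => (x i : K)) p = 0 := fun p => Iff.rfl
  have hP : P.IsPrime := by
    refine ⟨?_, ?_⟩
    · rw [Ideal.ne_top_iff_one]
      intro h1
      obtain ⟨x, hx⟩ := hV.2.1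
      simpa using (hPmem _).1 h1 x hx
    · intro p q hpq
      have h := hV.2.2 (zeroSet K {p}) (zeroSet K {q}) ⟨_, rfl⟩ ⟨_, rfl⟩ (by
        intro x hx
        have := (hPmem _).1 hpq x hx
        rw [map_mul, mul_eq_zero] at this
        rcases this with h1 | h1
        · left; rintro _ rfl; exact h1
        · right; rintro _ rfl; exact h1)
      rcases h with h | h
      · left; exact fun x hx => h hx p rfl
      · right; exact fun x hx => h hx q rfl
  let A := MvPolynomial ι K ⧸ P
  let Q := FractionRing A
  let f : MvPolynomial ι K →ₐ[K] Q :=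
    (IsScalarTower.toAlgHom K A Q).comp (Ideal.Quotient.mkₐ K P)
  refine ⟨Q, inferInstance, inferInstance, fun i => f (X i), ?_⟩
  intro p
  have h1 : aeval (fun i => f (X i)) p = f p := by
    rw [← MvPolynomial.comp_aeval_apply, aeval_X_left_apply]
  rw [h1, ← hPmem, ← Ideal.Quotient.eq_zero_iff_mem]
  change algebraMap A Q (Ideal.Quotient.mk P p) = 0 ↔ _
  rw [map_eq_zero_iff _ (IsFractionRing.injective A Q)]

lemma isGen_loc [IsAlgClosed K] {L : Type} [Field L] [Algebra K L] {a : ι → L}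
    (ha : ∀ i, a i ≠ 0) : IsGen (loc (K := K) a) a := by
  intro p
  refine ⟨fun hp x hx => hx p hp, fun hp => ?_⟩
  let P : Ideal (MvPolynomial ι K) := RingHom.ker (aeval a : MvPolynomial ι K →ₐ[K] L)
  have hP : P.IsPrime := RingHom.ker_isPrime _
  have h1 : p * ∏ i, X i ∈ vanishingIdeal K (zeroLocus K P) := by
    rw [mem_vanishingIdeal_iff]
    intro x hx
    rw [map_mul, map_prod]
    by_cases hx0 : ∃ i, x i = 0
    · obtain ⟨i, hi⟩ := hx0
      rw [Finset.prod_eq_zero (Finset.mem_univ i) (by simpa using hi), mul_zero]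
    · push Not at hx0
      have := hp (fun i => Units.mk0 (x i) (hx0 i)) (fun q hq => by
        have := (mem_zeroLocus_iff).1 hx q hq
        simpa [aeval_eq_eval] using this)
      simp only [Units.val_mk0] at this
      rw [aeval_eq_eval]
      rw [show (eval x) p = 0 from this, zero_mul]
  rw [MvPolynomial.IsPrime.vanishingIdeal_zeroLocus] at h1
  have h2 : aeval a (p * ∏ i, X i) = 0 := h1
  rw [map_mul, map_prod, mul_eq_zero] at h2
  refine h2.resolve_right ?_
  refine Finset.prod_ne_zero_iff.2 fun i _ => ?_
  simpa using ha i

lemma IsGen.rk_le {L L' : Type} [Field L] [Algebra K L] [Field L'] [Algebra K L']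
    {V V' : Set (ι → Kˣ)} {a : ι → L} {a' : ι → L'} (h : IsGen V a) (h' : IsGen V' a')
    (hsub : V ⊆ V') : rk K (Set.range a) ≤ rk K (Set.range a') :=
  rk_specialize fun p hp => (h p).2 fun x hx => (h' p).1 hp x (hsub hx)

lemma IsGen.rk_lt {L L' : Type} [Field L] [Algebra K L] [Field L'] [Algebra K L']
    {V V' : Set (ι → Kˣ)} {a : ι → L} {a' : ι → L'} (h : IsGen V a) (h' : IsGen V' a')
    (hV : IsZClosed K V) (hsub : V ⊂ V') : rk K (Set.range a) < rk K (Set.range a') := by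
  obtain ⟨S, rfl⟩ := hV
  obtain ⟨x, hxV', hx⟩ := Set.exists_of_ssubset hsub
  simp only [zeroSet, Set.mem_ofPred_eq, not_forall] at hx
  obtain ⟨p, hp, hpx⟩ := hx
  refine rk_specialize_lt (fun p hp => (h p).2 fun x hx => (h' p).1 hp x (hsub.1 hx)) p
    ((h p).2 fun y hy => hy p hp) fun h0 => hpx ((h' p).1 h0 x hxV')

lemma chain_len : ∀ (d : ℕ) (W : Fin (d + 1) → Set (ι → Kˣ)) (_ : ∀ i, IsIrredVar K (W i))
    (_ : StrictMono W) (L : Type) [Field L] [Algebra K L] (a : ι → L)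
    (_ : IsGen (W (Fin.last d)) a), (d : ℕ∞) ≤ rk K (Set.range a)
  | 0, _, _, _, _, _, _, _, _ => by simp
  | d + 1, W, hW, hmono, L, _, _, a, ha => by
    obtain ⟨L', _, _, a', ha'⟩ := exists_isGen (hW (Fin.last d).castSucc)
    have h1 := chain_len d (fun i => W i.castSucc) (fun i => hW _)
      (hmono.comp (Fin.strictMono_castSucc)) L' a' ha'
    have h2 := ha'.rk_lt ha (hW _).1 (hmono (Fin.castSucc_lt_last (Fin.last d)))
    push_cast
    exact Order.add_one_le_of_lt (h1.trans_lt h2)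

lemma vdim_bdd (V : Set (ι → Kˣ)) : BddAbove {d | ∃ W : Fin (d + 1) → Set (ι → Kˣ),
    (∀ i, IsIrredVar K (W i) ∧ W i ⊆ V) ∧ StrictMono W} := by
  refine ⟨Nat.card ι, ?_⟩
  rintro d ⟨W, hW, hm⟩
  obtain ⟨L, _, _, a, ha⟩ := exists_isGen (hW (Fin.last d)).1
  have h1 := chain_len d W (fun i => (hW i).1) hm L a ha
  exact_mod_cast h1.trans (rk_range_le_card a)

lemma vdim_mono {V V' : Set (ι → Kˣ)} (h : V ⊆ V') : vdim K V ≤ vdim K V' := by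
  unfold vdim
  apply csSup_le'
  rintro d ⟨W, hW, hm⟩
  exact le_csSup (vdim_bdd V') ⟨W, fun i => ⟨(hW i).1, (hW i).2.trans h⟩, hm⟩

/-- upper bound for the dimension from generic points of irreducible subvarieties. -/
lemma vdim_le {V : Set (ι → Kˣ)} {d : ℕ}
    (h : ∀ V', IsIrredVar K V' → V' ⊆ V → ∀ (L : Type) [Field L] [Algebra K L] (a : ι → L),
      IsGen V' a → rk K (Set.range a) ≤ d) : vdim K V ≤ d := by
  unfold vdim
  apply csSup_le'
  rintro e ⟨W, hW, hm⟩
  obtain ⟨L, _, _, a, ha⟩ := exists_isGen (hW (Fin.last e)).1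
  have h1 := chain_len e W (fun i => (hW i).1) hm L a ha
  exact_mod_cast h1.trans (h _ (hW _).1 (hW _).2 L a ha)

lemma exists_chain [IsAlgClosed K] : ∀ (d : ℕ) (L : Type) [Field L] [Algebra K L] (a : ι → L)
    (_ : ∀ i, a i ≠ 0) (_ : rk K (Set.range a) = d), ∃ W : Fin (d + 1) → Set (ι → Kˣ),
      (∀ i, IsIrredVar K (W i) ∧ W i ⊆ loc a) ∧ StrictMono W ∧ W (Fin.last d) = loc a
  | 0, L, _, _, a, ha, _ =>
    ⟨fun _ => loc a, fun _ => ⟨(isGen_loc ha).irred (isZClosed_loc a), subset_rfl⟩,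
      fun i j hij => absurd hij (by omega), rfl⟩
  | d + 1, L, _, _, a, ha, hd => by
    obtain ⟨L', _, _, a', ha', hsp, hd'⟩ := exists_drop a ha d hd
    obtain ⟨W, hW, hm, hlast⟩ := exists_chain d L' a' ha' hd'
    have hsub : loc (K := K) a' ⊆ loc a := fun x hx p hp => hx p (hsp p hp)
    have hne : loc (K := K) a' ≠ loc a := by
      intro heq
      have g' := isGen_loc (K := K) ha'
      rw [heq] at g'
      have h1 := (isGen_loc (K := K) ha).rk_le g' subset_rfl
      rw [hd, hd'] at h1
      have : d + 1 ≤ d := by exact_mod_cast h1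
      omega
    refine ⟨Fin.snoc (α := fun _ => Set (ι → Kˣ)) W (loc a), ?_, ?_, by simp⟩
    · intro i
      refine Fin.lastCases ?_ (fun j => ?_) i
      · rw [Fin.snoc_last]
        exact ⟨(isGen_loc ha).irred (isZClosed_loc a), subset_rfl⟩
      · rw [Fin.snoc_castSucc]
        exact ⟨(hW j).1, (hW j).2.trans hsub⟩
    · rw [Fin.strictMono_iff_lt_succ]
      intro i
      refine Fin.lastCases ?_ (fun j => ?_) i
      · rw [Fin.snoc_castSucc, Fin.succ_last, Fin.snoc_last, hlast]
        exact lt_of_le_of_ne hsub hne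
      · rw [Fin.snoc_castSucc, Fin.succ_castSucc, Fin.snoc_castSucc]
        exact hm Fin.castSucc_lt_succ

/-- The dimension of an irreducible variety is the transcendence degree of a generic point. -/
lemma IsGen.vdim_eq [IsAlgClosed K] {L : Type} [Field L] [Algebra K L] {a : ι → L}
    {V : Set (ι → Kˣ)} (h : IsGen V a) (hV : IsZClosed K V) :
    (vdim K V : ℕ∞) = rk K (Set.range a) := by
  have hne := h.ne_zero (h.irred hV).2.1
  obtain ⟨d, hd⟩ := ENat.ne_top_iff_exists.1
    ((rk_range_le_card (F := K) a).trans_lt (ENat.natCast_lt_top _)).ne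
  rw [← hd]
  norm_cast
  apply le_antisymm
  · refine vdim_le fun V' hV' hsub L' _ _ a' ha' => ?_
    rw [hd]
    exact ha'.rk_le h hsub
  · obtain ⟨W, hW, hm, -⟩ := exists_chain d L a hne hd.symm
    rw [← h.eq_loc hV] at hW
    exact le_csSup (vdim_bdd V) ⟨W, hW, hm⟩

lemma eval_map_image {F : Type} [Field F] [Algebra F K] {L : Type} [Field L] [Algebra K L]
    (φ : K →+* L)
    (hφ : ∀ x : F, φ (algebraMap F K x) = algebraMap K L (algebraMap F K x)) (b : ι → K)
    {p : MvPolynomial ι K} (hp : ∀ m, coeff m p ∈ Set.range (algebraMap F K)) :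
    aeval (fun i => φ (b i)) p = φ (eval b p) := by
  rw [aeval_def, eval₂_eq, eval_eq, map_sum]
  refine Finset.sum_congr rfl fun m _ => ?_
  obtain ⟨x, hx⟩ := hp m
  rw [map_mul, map_prod, ← hx, hφ]
  simp only [map_pow]

lemma loc_subset {F : Type} [Field F] [Algebra F K] {L : Type} [Field L] [Algebra K L]
    (φ : K →+* L)
    (hφ : ∀ x : F, φ (algebraMap F K x) = algebraMap K L (algebraMap F K x)) (b : ι → Kˣ)
    {V : Set (ι → Kˣ)} (hV : IsClosedOver K (Set.range (algebraMap F K)) V) (hb : b ∈ V) :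
    loc (K := K) (fun i => φ (b i)) ⊆ V := by
  obtain ⟨S, hS, rfl⟩ := hV
  intro x hx p hp
  apply hx
  rw [eval_map_image φ hφ _ (hS p hp), hb p hp, map_zero]

lemma rk_le_vdim [IsAlgClosed K] {F : Type} [Field F] [Algebra F K] (b : ι → Kˣ)
    {V : Set (ι → Kˣ)} (hV : IsClosedOver K (Set.range (algebraMap F K)) V) (hb : b ∈ V) :
    rk F (Set.range fun i => (b i : K)) ≤ vdim K V := by
  obtain ⟨L, _, _, φ, hφ, h1, -⟩ := exists_free_copy_rk (F := F) (K := K)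
    (Set.range fun i => (b i : K)) _ subset_rfl
  have hsub := loc_subset φ hφ b hV hb
  have hg := isGen_loc (K := K) (a := fun i => φ (b i)) (by simp)
  rw [← h1, ← Set.range_comp]
  refine (hg.vdim_eq (isZClosed_loc _)).symm.le.trans ?_
  exact_mod_cast vdim_mono hsub

end Geometry

section Monomial

open MvPolynomial

variable {K : Type} [Field K] {n k : ℕ}

/-- numerator of a monomial. -/
noncomputable def mnum (R : Type) [CommRing R] (M : Matrix (Fin k) (Fin n) ℤ) (j : Fin k) :
    MvPolynomial (Fin n) R := ∏ i, X i ^ (M j i + ∑ i, (M j i).natAbs).toNat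

lemma aeval_mnum {R L : Type} [CommRing R] [Field L] [Algebra R L] (M : Matrix (Fin k) (Fin n) ℤ)
    (j : Fin k) (y : Fin n → L) (hy : ∀ i, y i ≠ 0) :
    aeval y (mnum R M j) = (∏ i, y i ^ M j i) * (∏ i, y i) ^ (∑ i, (M j i).natAbs) := by
  rw [mnum, map_prod, ← Finset.prod_pow, ← Finset.prod_mul_distrib]
  refine Finset.prod_congr rfl fun i _ => ?_
  rw [map_pow, aeval_X, ← zpow_natCast, ← zpow_natCast, ← zpow_add₀ (hy i)]
  congr 1
  apply Int.toNat_of_nonneg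
  have h1 : (M j i).natAbs ≤ ∑ i, (M j i).natAbs :=
    Finset.single_le_sum (f := fun i => (M j i).natAbs) (fun _ _ => Nat.zero_le _)
      (Finset.mem_univ i)
  omega

/-- Clearing denominators after substituting monomials. -/
lemma exists_clear (M : Matrix (Fin k) (Fin n) ℤ) (q : MvPolynomial (Fin k) K) :
    ∃ (N : ℕ) (q' : MvPolynomial (Fin n) K), ∀ (L : Type) [Field L] [Algebra K L]
      (y : Fin n → L), (∀ i, y i ≠ 0) →
      aeval (fun j => ∏ i, y i ^ M j i) q * (∏ i, y i) ^ N = aeval y q' := by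
  induction q using MvPolynomial.induction_on with
  | C r => exact ⟨0, C r, fun L _ _ y hy => by simp⟩
  | add p q hp hq =>
    obtain ⟨N, p', hp⟩ := hp
    obtain ⟨N', q', hq⟩ := hq
    refine ⟨N + N', p' * (∏ i, X i) ^ N' + q' * (∏ i, X i) ^ N, fun L _ _ y hy => ?_⟩
    simp only [map_add, map_mul, map_pow, map_prod, aeval_X, ← hp L y hy, ← hq L y hy]
    ring
  | mul_X p j hp =>
    obtain ⟨N, p', hp⟩ := hp
    refine ⟨N + ∑ i, (M j i).natAbs, p' * mnum K M j, fun L _ _ y hy => ?_⟩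
    simp only [map_mul, aeval_X, ← hp L y hy, aeval_mnum M j y hy]
    ring

/-- the equation `y^M_j = c`. -/
noncomputable def meq {R : Type} [CommRing R] (M : Matrix (Fin k) (Fin n) ℤ) (j : Fin k) (c : R) :
    MvPolynomial (Fin n) R := mnum R M j - C c * (∏ i, X i) ^ (∑ i, (M j i).natAbs)

lemma aeval_meq {R L : Type} [CommRing R] [Field L] [Algebra R L] (M : Matrix (Fin k) (Fin n) ℤ)
    (j : Fin k) (c : R) (y : Fin n → L) (hy : ∀ i, y i ≠ 0) :
    aeval y (meq M j c) = 0 ↔ ∏ i, y i ^ M j i = algebraMap R L c := by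
  have h0 : (∏ i, y i) ^ (∑ i, (M j i).natAbs) ≠ 0 :=
    pow_ne_zero _ (Finset.prod_ne_zero_iff.2 fun i _ => hy i)
  rw [meq, map_sub, aeval_mnum M j y hy, map_mul, map_pow, map_prod]
  simp only [aeval_X, aeval_C]
  rw [← sub_mul, mul_eq_zero, or_iff_left h0, sub_eq_zero]

lemma map_meq {R S : Type} [CommRing R] [CommRing S] (f : R →+* S) (M : Matrix (Fin k) (Fin n) ℤ)
    (j : Fin k) (c : R) : MvPolynomial.map f (meq M j c) = meq M j (f c) := by
  simp [meq, mnum]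

lemma coe_mpow (M : Matrix (Fin k) (Fin n) ℤ) (y : Fin n → Kˣ) (j : Fin k) :
    ((mpow K M y j : Kˣ) : K) = ∏ i, (y i : K) ^ M j i := by
  simp [mpow, Units.coe_prod]

lemma mem_coset_iff (M : Matrix (Fin k) (Fin n) ℤ) (b y : Fin n → Kˣ) :
    y ∈ coset K b {y | mpow K M y = 1} ↔ ∀ j, mpow K M y j = mpow K M b j := by
  have hmul : ∀ x z : Fin n → Kˣ, ∀ j, mpow K M (x * z) j = mpow K M x j * mpow K M z j := by
    intro x z j
    simp [mpow, mul_zpow, Finset.prod_mul_distrib]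
  constructor
  · rintro ⟨t, ht, rfl⟩ j
    have ht' : mpow K M t = 1 := ht
    change mpow K M (b * t) j = _
    rw [hmul, ht']
    simp
  · intro h
    refine ⟨b⁻¹ * y, ?_, by simp⟩
    change mpow K M (b⁻¹ * y) = 1
    funext j
    have h1 := hmul b (b⁻¹ * y) j
    rw [mul_inv_cancel_left, h j] at h1
    simpa using h1

lemma mon_mem_acl {F L : Type} [Field F] [Field L] [Algebra F L] (M : Matrix (Fin k) (Fin n) ℤ)
    (y : Fin n → L) (j : Fin k) : ∏ i, y i ^ M j i ∈ acl F (Set.range y) :=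
  prod_mem fun i _ => zpow_mem (subset_acl _ (Set.mem_range_self i)) _

lemma isClosedOver_fibre (M : Matrix (Fin k) (Fin n) ℤ) (b : Fin n → Kˣ) (F : Subfield K)
    (hF : ∀ j, ((mpow K M b j : Kˣ) : K) ∈ F) {W : Set (Fin n → Kˣ)}
    (hW : IsClosedOver K (F : Set K) W) :
    IsClosedOver K (F : Set K) (W ∩ coset K b {y | mpow K M y = 1}) := by
  obtain ⟨S, hS, rfl⟩ := hW
  refine ⟨S ∪ Set.range fun j => meq M j ((mpow K M b j : Kˣ) : K), ?_, ?_⟩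
  · rintro p (hp | ⟨j, rfl⟩) m
    · exact hS p hp m
    · have := map_meq (algebraMap F K) M j (⟨((mpow K M b j : Kˣ) : K), hF j⟩ : F)
      change coeff m (meq (R := K) M j (algebraMap F K (⟨((mpow K M b j : Kˣ) : K), hF j⟩ : F))) ∈ (F : Set K)
      rw [← this, coeff_map]
      exact SetLike.coe_mem _
  · have key : ∀ (x : Fin n → Kˣ) (j : Fin k),
        eval (fun i => (x i : K)) (meq M j ((mpow K M b j : Kˣ) : K)) = 0 ↔
          mpow K M x j = mpow K M b j := by
      intro x j
      have := aeval_meq M j ((mpow K M b j : Kˣ) : K) (fun i => (x i : K)) (by simp)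
      rw [aeval_eq_eval] at this
      refine this.trans ?_
      rw [← coe_mpow]
      simp [Units.ext_iff]
    ext x
    constructor
    · rintro ⟨h1, h2⟩ p (hp | ⟨j, rfl⟩)
      · exact h1 p hp
      · exact (key x j).2 ((mem_coset_iff M b x).1 h2 j)
    · intro h
      exact ⟨fun p hp => h p (Or.inl hp),
        (mem_coset_iff M b x).2 fun j => (key x j).1 (h _ (Or.inr ⟨j, rfl⟩))⟩

lemma isZClosed_zcl {ι : Type} [Fintype ι] (S : Set (ι → Kˣ)) : IsZClosed K (zcl K S) ∧
    ∀ p : MvPolynomial ι K, (∀ x ∈ zcl K S, eval (fun i => (x i : K)) p = 0) ↔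
      ∀ x ∈ S, eval (fun i => (x i : K)) p = 0 := by
  have hS : S ⊆ zcl K S := fun x hx C hC => hC.2 hx
  have h2 : ∀ p : MvPolynomial ι K, (∀ x ∈ zcl K S, eval (fun i => (x i : K)) p = 0) ↔
      ∀ x ∈ S, eval (fun i => (x i : K)) p = 0 := by
    refine fun p => ⟨fun h x hx => h x (hS hx), fun h x hx => ?_⟩
    exact hx (zeroSet K {p}) ⟨⟨_, rfl⟩, fun y hy q hq => by rw [hq]; exact h y hy⟩ p rfl
  refine ⟨⟨{p | ∀ x ∈ S, eval (fun i => (x i : K)) p = 0}, ?_⟩, h2⟩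
  apply Set.Subset.antisymm
  · intro x hx p hp
    exact (h2 p).2 hp x hx
  · rintro x hx C ⟨⟨S', rfl⟩, hC⟩ p hp
    exact hx p fun y hy => hC hy p hp

lemma isGen_image {L : Type} [Field L] [Algebra K L] (M : Matrix (Fin k) (Fin n) ℤ)
    {W : Set (Fin n → Kˣ)} {a : Fin n → L} (h : IsGen W a) (hW : W.Nonempty) :
    IsGen (zcl K (mpow K M '' W)) (fun j => ∏ i, a i ^ M j i) := by
  intro p
  rw [(isZClosed_zcl _).2]
  obtain ⟨N, q, hq⟩ := exists_clear M p
  have ha := h.ne_zero hW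
  have key : ∀ (L : Type) [Field L] [Algebra K L] (y : Fin n → L), (∀ i, y i ≠ 0) →
      (aeval (fun j => ∏ i, y i ^ M j i) p = 0 ↔ aeval y q = 0) := by
    intro L _ _ y hy
    rw [← hq L y hy, mul_eq_zero, or_iff_left]
    exact pow_ne_zero _ (Finset.prod_ne_zero_iff.2 fun i _ => hy i)
  rw [key L a ha, h q, Set.forall_mem_image]
  refine forall₂_congr fun x _ => ?_
  have := key K (fun i => (x i : K)) (by simp)
  rw [aeval_eq_eval, aeval_eq_eval] at this
  simp only [coe_mpow]
  exact this.symm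

end Monomial

section Base

lemma trdegOver_eq {K : Type} [Field K] (F : Subfield K) {s : Set K} (hs : s.Finite) :
    (trdegOver K F s : ℕ∞) = rk F s := by
  obtain ⟨t, hts, ht, hcard, -⟩ := exists_basis (F := F) s
  have htf := hs.subset hts
  obtain ⟨t, rfl⟩ := htf.exists_finset_coe
  rw [← hcard, Set.encard_coe_eq_coe_finsetCard]
  norm_cast
  have hub : t.card ∈ upperBounds {d | ∃ t : Finset K, ↑t ⊆ s ∧ t.card = d ∧
    AlgebraicIndependent F (fun x : {y : K // y ∈ t} => (x : K))} := by
    rintro d ⟨u, hus, rfl, hu⟩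
    have := encard_le_rk (F := F) (t := (u : Set K)) hu hus
    rw [← hcard, Set.encard_coe_eq_coe_finsetCard, Set.encard_coe_eq_coe_finsetCard] at this
    exact_mod_cast this
  exact le_antisymm (csSup_le' hub) (le_csSup ⟨_, hub⟩ ⟨t, hts, rfl, ht⟩)

lemma rk_bot {K : Type} [Field K] [CharZero K] (s : Set K) :
    rk (⊥ : Subfield K) s = rk ℚ s := by
  apply le_antisymm
  · exact rk_le_of_tower s
  · have h := rk_add_upper (F := ℚ) (E := (⊥ : Subfield K)) (c := ∅) (s := s)
      (fun x => (bot_le : (⊥ : Subfield K) ≤ acl ℚ ∅) x.2)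
    have h0 : rk ℚ (∅ : Set K) ≤ 0 := by simpa using rk_le_encard (F := ℚ) (∅ : Set K)
    rw [nonpos_iff_eq_zero.1 h0, zero_add] at h
    exact h

lemma IsClosedOver.mono {K : Type} [Field K] {ι : Type} [Fintype ι] {A B : Set K} (h : A ⊆ B)
    {V : Set (ι → Kˣ)} (hV : IsClosedOver K A V) : IsClosedOver K B V := by
  obtain ⟨S, hS, rfl⟩ := hV
  exact ⟨S, fun p hp m => h (hS p hp m), rfl⟩

end Base

open MvPolynomial in
lemma fibre_upper {K : Type} [Field K] [IsAlgClosed K] [CharZero K]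
    {n k : ℕ} {W : Set (Fin n → Kˣ)} (M : Matrix (Fin k) (Fin n) ℤ) (b : Fin n → Kˣ)
    {L : Type} [Field L] [Algebra K L] (φ : K →+* L)
    (hφ : ∀ x : ℚ, φ (algebraMap ℚ K x) = algebraMap K L (algebraMap ℚ K x))
    (hg : IsGen W (fun i => φ (b i))) (d : ℕ)
    (hd : rk ℚ (Set.range fun i => (b i : K)) ≤
      rk ℚ (Set.range fun j => ((mpow K M b j : Kˣ) : K)) + d) :
    vdim K (W ∩ coset K b {y | mpow K M y = 1}) ≤ d := by
  refine vdim_le fun V hV hVsub L' _ _ a' ha' => ?_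
  have hne := ha'.ne_zero hV.2.1
  have : CharZero L' := charZero_of_injective_algebraMap (algebraMap K L').injective
  have hmon : ∀ j, ∏ i, a' i ^ M j i = algebraMap K L' ((mpow K M b j : Kˣ) : K) := by
    intro j
    rw [← aeval_meq M j _ a' hne, ha']
    intro x hx
    have h1 := aeval_meq M j ((mpow K M b j : Kˣ) : K) (fun i => (x i : K)) (by simp)
    rw [aeval_eq_eval] at h1
    refine h1.2 ?_
    rw [← coe_mpow, (mem_coset_iff M b x).1 (hVsub hx).2 j]
    rfl
  have hspec : ∀ p : MvPolynomial (Fin n) ℚ, aeval (fun i => (b i : K)) p = 0 →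
      aeval a' p = 0 := by
    intro p hp
    have h1 : aeval (fun i => φ (b i)) (MvPolynomial.map (algebraMap ℚ K) p) = 0 := by
      rw [eval_map_image (F := ℚ) φ hφ _ (fun m => ⟨_, (coeff_map _ _ _).symm⟩), eval_map,
        ← aeval_def, hp, map_zero]
    have h2 := (ha' _).2 fun x hx => (hg _).1 h1 x (hVsub hx).1
    rwa [aeval_map_algebraMap] at h2
  have h1 : rk ℚ (Set.range a') ≤ rk ℚ (Set.range fun i => (b i : K)) := rk_specialize hspec
  set c : Fin k → K := fun j => ((mpow K M b j : Kˣ) : K) with hc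
  let F := Subfield.closure (Set.range c)
  have h2 : rk ℚ (Set.range c) ≤ rk ℚ (Set.range fun j => algebraMap K L' (c j)) := by
    refine rk_specialize fun p hp => ?_
    have h3 : aeval (fun j => algebraMap K L' (c j)) p = algebraMap K L' (aeval c p) :=
      aeval_algebraMap_apply _ _ _
    rw [h3] at hp
    exact (map_eq_zero _).1 hp
  have : IsScalarTower ℚ F L' := IsScalarTower.of_algebraMap_eq' (Subsingleton.elim _ _)
  have h3 := rk_add_lower (F := ℚ) (E := F) (c := Set.range fun j => algebraMap K L' (c j))
    (s := Set.range a') (by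
      rintro _ ⟨j, rfl⟩
      exact ⟨⟨c j, Subfield.subset_closure ⟨j, rfl⟩⟩, rfl⟩) (by
      rintro _ ⟨j, rfl⟩
      change algebraMap K L' (c j) ∈ acl ℚ (Set.range a')
      rw [← hmon j]
      exact mon_mem_acl M a' j)
  have h4 : rk K (Set.range a') ≤ rk F (Set.range a') := rk_le_of_tower _
  have h5 : rk ℚ (Set.range c) + rk K (Set.range a') ≤ rk ℚ (Set.range c) + d :=
    (add_le_add h2 h4).trans (h3.trans (h1.trans hd))
  refine (ENat.add_le_add_iff_left ?_).1 h5
  exact ((rk_range_le_card (F := ℚ) c).trans_lt (ENat.natCast_lt_top _)).ne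


/-- Fibre-dimension formula for monomial maps: if `W ⊆ (Kˣ)ⁿ` is irreducible
over `ℚ`, `M` an integer `k × n` matrix of rank `k` with associated subtorus `T = {y | y^M = 1}`
and `W_M` the Zariski closure of `W^M`, then for every `b ∈ W` generic over `ℚ`,
`dim (W ∩ bT) = dim W - dim W_M` and `dim (W ∩ bT) = trdeg(ℚ(b)/ℚ(b^M))`. -/
theorem dim_fibre_of_monomial_map
    (K : Type) [Field K] [IsAlgClosed K] [CharZero K]
    {n k : ℕ} (W : Set (Fin n → Kˣ))
    (hWirr : IsIrredVar K W) (hWQ : IsClosedOver K (↑(⊥ : Subfield K)) W)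
    (M : Matrix (Fin k) (Fin n) ℤ) (hrk : M.rank = k)
    (T : Set (Fin n → Kˣ)) (hT : T = {y | mpow K M y = 1})
    (WM : Set (Fin k → Kˣ)) (hWM : WM = zcl K (mpow K M '' W))
    (b : Fin n → Kˣ) (hbW : b ∈ W)
    (hgen : trdegQ K (Set.range fun i => ((b i : Kˣ) : K)) = vdim K W) :
    vdim K (W ∩ coset K b T) = vdim K W - vdim K WM ∧
    vdim K (W ∩ coset K b T) =
      trdegOver K (Subfield.closure (Set.range fun j => ((mpow K M b j : Kˣ) : K)))
        (Set.range fun i => ((b i : Kˣ) : K)) := by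
  subst hT hWM
  set c : Fin k → K := fun j => ((mpow K M b j : Kˣ) : K) with hc
  set b' : Fin n → K := fun i => ((b i : Kˣ) : K) with hb'
  let F := Subfield.closure (Set.range c)
  have hcacl : Set.range c ⊆ acl ℚ (Set.range b') := by
    rintro _ ⟨j, rfl⟩
    change ((mpow K M b j : Kˣ) : K) ∈ acl ℚ (Set.range b')
    rw [coe_mpow]
    exact mon_mem_acl M b' j
  have hN : (vdim K W : ℕ∞) = rk ℚ (Set.range b') := by
    rw [← hgen, trdegQ, trdegOver_eq _ (Set.finite_range _), rk_bot]
  have hd := trdegOver_eq F (Set.finite_range b')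
  set d := trdegOver K F (Set.range b') with hddef
  have hadd : rk ℚ (Set.range b') = rk ℚ (Set.range c) + d := by
    rw [hd]
    apply le_antisymm
    · refine rk_add_upper fun x => ?_
      exact (Subfield.closure_le.2 (subset_acl (F := ℚ) (Set.range c))) x.2
    · refine rk_add_lower ?_ hcacl
      rintro _ ⟨j, rfl⟩
      exact ⟨⟨c j, Subfield.subset_closure ⟨j, rfl⟩⟩, rfl⟩
  obtain ⟨L, _, _, φ, hφ, hr0, hr1⟩ := exists_free_copy_rk (F := ℚ) (K := K) (Set.range c)
    (Set.range b' ∪ Set.range c) Set.subset_union_right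
  have hφc : ∀ j, φ (c j) = ∏ i, φ (b i) ^ M j i := by
    intro j
    change φ ((mpow K M b j : Kˣ) : K) = _
    rw [coe_mpow, map_prod]
    simp only [map_zpow₀]
  have hrange : φ '' Set.range b' = Set.range fun i => φ (b i) := (Set.range_comp _ _).symm
  have hrangec : φ '' Set.range c = Set.range fun j => φ (c j) := (Set.range_comp _ _).symm
  have hra : rk K (Set.range fun i => φ (b i)) = vdim K W := by
    rw [hN]
    apply le_antisymm
    · rw [← hrange]
      exact rk_image_le φ hφ _
    · refine (rk_mono Set.subset_union_left).trans (hr1.symm.le.trans (rk_le_of_subset_acl ?_))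
      rw [Set.image_union, hrange]
      refine Set.union_subset (subset_acl _) ?_
      rw [hrangec]
      rintro _ ⟨j, rfl⟩
      change φ (c j) ∈ acl K _
      rw [hφc]
      exact mon_mem_acl M _ j
  have hbot : ((⊥ : Subfield K) : Set K) ⊆ Set.range (algebraMap ℚ K) :=
    (bot_le : (⊥ : Subfield K) ≤ (algebraMap ℚ K).fieldRange)
  have hloc := loc_subset φ hφ b (hWQ.mono hbot) hbW
  have hgl : IsGen (loc (K := K) fun i => φ (b i)) (fun i => φ (b i)) := isGen_loc (by simp)
  have hWeq : loc (K := K) (fun i => φ (b i)) = W := by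
    by_contra hne
    obtain ⟨L', _, _, a', ha'⟩ := exists_isGen hWirr
    have h1 := hgl.rk_lt ha' (isZClosed_loc _) (lt_of_le_of_ne hloc hne)
    rw [← ha'.vdim_eq hWirr.1, hra] at h1
    exact lt_irrefl _ h1
  have hgW : IsGen W (fun i => φ (b i)) := by
    rw [← hWeq]
    exact hgl
  have hdim : vdim K (W ∩ coset K b {y | mpow K M y = 1}) = d := by
    apply le_antisymm
    · exact fibre_upper M b φ hφ hgW d hadd.le
    · have hcl := isClosedOver_fibre M b F (fun j => Subfield.subset_closure ⟨j, rfl⟩)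
        (hWQ.mono (show ((⊥ : Subfield K) : Set K) ⊆ (F : Set K) from
          (bot_le : (⊥ : Subfield K) ≤ F)))
      have h1 := rk_le_vdim (F := F) b
        (hcl.mono (B := Set.range (algebraMap F K)) (fun x hx => ⟨⟨x, hx⟩, rfl⟩)) ⟨hbW, (mem_coset_iff M b b).2 fun _ => rfl⟩
      have h2 : (d : ℕ∞) ≤ _ := hd.le.trans h1
      exact_mod_cast h2
  have hWM : (vdim K (zcl K (mpow K M '' W)) : ℕ∞) = rk ℚ (Set.range c) := by
    rw [(isGen_image M hgW hWirr.2.1).vdim_eq (isZClosed_zcl _).1, ← hr0, hrangec]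
    simp only [hφc]
  refine ⟨?_, hdim⟩
  rw [hdim]
  have h1 : (vdim K W : ℕ∞) = vdim K (zcl K (mpow K M '' W)) + d := by
    rw [hN, hWM, hadd]
  have h2 : vdim K W = vdim K (zcl K (mpow K M '' W)) + d := by exact_mod_cast h1
  omega

end BadFields
end

section
/- Let K be an algebraically closed field of characteristic 0, let A = ⟨A⟩ ⊆ Kˣ, and let b ∈ (Kˣ)ⁿ be a tuple such that the extension ⟨A ∪ b⟩/A is minimal prealgebraic of length n. Let T ⊆ (Kˣ)ⁿ × (Kˣ)ⁿ be a correspondence torus and let b' ∈ (Kˣ)ⁿ be such that (b, b') ∈ T. Then ⟨A ∪ b'⟩ = ⟨A ∪ b⟩, and the extension ⟨A ∪ b'⟩/A is minimal prealgebraic of length n. -/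
namespace BadFields

variable (K : Type) [Field K]

section Helpers

variable {K}
variable {ι : Type} [Fintype ι]

/-- The monomial `y ^ c`. -/
def mon (y : ι → Kˣ) (c : ι → ℤ) : Kˣ := ∏ i, y i ^ c i

theorem mon_zero (y : ι → Kˣ) : mon y 0 = 1 := by simp [mon]

theorem mon_add (y : ι → Kˣ) (c d : ι → ℤ) : mon y (c + d) = mon y c * mon y d := by
  simp [mon, zpow_add, Finset.prod_mul_distrib]

theorem mon_smul (y : ι → Kˣ) (m : ℤ) (c : ι → ℤ) : mon y (m • c) = mon y c ^ m := by
  simp only [mon, ← Finset.prod_zpow]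
  exact Finset.prod_congr rfl fun i _ => by
    rw [Pi.smul_apply, smul_eq_mul, mul_comm, zpow_mul]

theorem mon_sum {κ : Type} (s : Finset κ) (y : ι → Kˣ) (a : κ → ℤ) (c : κ → ι → ℤ) :
    mon y (∑ k ∈ s, a k • c k) = ∏ k ∈ s, mon y (c k) ^ a k := by
  classical
  induction s using Finset.induction_on with
  | empty => simp [mon_zero]
  | insert k s hk ih => rw [Finset.sum_insert hk, Finset.prod_insert hk, mon_add, mon_smul, ih]

theorem mon_single [DecidableEq ι] (y : ι → Kˣ) (i : ι) (m : ℤ) :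
    mon y (Pi.single i m) = y i ^ m := by
  rw [mon, Finset.prod_eq_single i]
  · simp
  · intro j _ hj; simp [hj]
  · simp

theorem mon_mulSingle [DecidableEq ι] (i : ι) (u : Kˣ) (c : ι → ℤ) :
    mon (Pi.mulSingle i u) c = u ^ c i := by
  rw [mon, Finset.prod_eq_single i]
  · simp
  · intro j _ hj; simp [hj]
  · simp

theorem eval_natMon (t : ι → Kˣ) (m : ι → ℕ) :
    MvPolynomial.eval (fun i => (t i : K)) (∏ i, MvPolynomial.X i ^ m i) =
      ((mon t (fun i => (m i : ℤ)) : Kˣ) : K) := by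
  simp [mon]

/-- Clearing denominators in a polynomial precomposed with a monomial map. -/
theorem exists_clear_s6 (r : ι → ι → ℤ) (p : MvPolynomial ι K) :
    ∃ (q : MvPolynomial ι K) (m : ι → ℕ), ∀ t : ι → Kˣ,
      MvPolynomial.eval (fun i => (t i : K)) q =
        ((mon t (fun i => (m i : ℤ)) : Kˣ) : K) *
          MvPolynomial.eval (fun k => ((mon t (r k) : Kˣ) : K)) p := by
  induction p using MvPolynomial.induction_on with
  | C a =>
    refine ⟨MvPolynomial.C a, 0, fun t => ?_⟩
    have : (fun i : ι => (((0 : ι → ℕ) i : ℕ) : ℤ)) = 0 := by ext; simp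
    rw [this, mon_zero]; simp
  | add p₁ p₂ h₁ h₂ =>
    obtain ⟨q₁, m₁, h₁⟩ := h₁
    obtain ⟨q₂, m₂, h₂⟩ := h₂
    refine ⟨(∏ i, MvPolynomial.X i ^ m₂ i) * q₁ + (∏ i, MvPolynomial.X i ^ m₁ i) * q₂,
      m₁ + m₂, fun t => ?_⟩
    have : (fun i : ι => (((m₁ + m₂) i : ℕ) : ℤ)) =
        (fun i => (m₁ i : ℤ)) + (fun i => (m₂ i : ℤ)) := by ext; simp
    rw [this, mon_add, map_add, map_add, map_mul, map_mul, eval_natMon, eval_natMon, h₁, h₂]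
    push_cast
    ring
  | mul_X p k h =>
    obtain ⟨q, m, h⟩ := h
    refine ⟨q * ∏ i, MvPolynomial.X i ^ ((r k i).natAbs + r k i).toNat,
      m + fun i => (r k i).natAbs, fun t => ?_⟩
    have h1 : (fun i : ι => (((m + fun i => (r k i).natAbs) i : ℕ) : ℤ)) =
        (fun i => (m i : ℤ)) + (fun i => ((r k i).natAbs : ℤ)) := by ext; simp
    have h2 : (fun i : ι => ((((r k i).natAbs + r k i).toNat : ℕ) : ℤ)) =
        (fun i => ((r k i).natAbs : ℤ)) + r k := by
      ext i; simp only [Pi.add_apply]; omega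
    rw [h1, map_mul, map_mul, eval_natMon, h2, h, mon_add, mon_add, MvPolynomial.eval_X]
    push_cast
    ring

theorem irred_image [Infinite K] (r : ι → ι → ℤ) (V : Set (ι → Kˣ))
    (hV : V = Set.range fun t : ι → Kˣ => fun k => mon t (r k))
    (C₁ C₂ : Set (ι → Kˣ)) (h₁ : IsZClosed K C₁) (h₂ : IsZClosed K C₂) (h : V ⊆ C₁ ∪ C₂) :
    V ⊆ C₁ ∨ V ⊆ C₂ := by
  obtain ⟨S₁, rfl⟩ := h₁
  obtain ⟨S₂, rfl⟩ := h₂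
  have key : ∀ S : Set (MvPolynomial ι K), ¬ V ⊆ zeroSet K S →
      ∃ p ∈ S, ∃ q : MvPolynomial ι K, q ≠ 0 ∧ ∀ t : ι → Kˣ,
        MvPolynomial.eval (fun k => ((mon t (r k) : Kˣ) : K)) p = 0 →
        MvPolynomial.eval (fun i => (t i : K)) q = 0 := by
    intro S hS
    obtain ⟨y, hy, hyS⟩ := Set.not_subset.1 hS
    rw [hV] at hy
    obtain ⟨t, rfl⟩ := hy
    simp only [zeroSet, Set.mem_ofPred_eq, not_forall] at hyS
    obtain ⟨p, hp, hpt⟩ := hyS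
    obtain ⟨q, m, hq⟩ := exists_clear_s6 r p
    refine ⟨p, hp, q, ?_, fun t ht => by rw [hq, ht, mul_zero]⟩
    rintro rfl
    have := hq t
    rw [map_zero] at this
    rcases mul_eq_zero.1 this.symm with h | h
    · exact Units.ne_zero _ h
    · exact hpt h
  by_contra hcon
  rw [not_or] at hcon
  obtain ⟨p₁, hp₁, q₁, hq₁, e₁⟩ := key S₁ hcon.1
  obtain ⟨p₂, hp₂, q₂, hq₂, e₂⟩ := key S₂ hcon.2
  apply mul_ne_zero hq₁ hq₂
  refine MvPolynomial.funext_set (fun _ => {x : K | x ≠ 0}) (fun _ => ?_) ?_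
  · exact (Set.finite_singleton (0 : K)).infinite_compl
  · intro x hx
    let t : ι → Kˣ := fun i => Units.mk0 (x i) (hx i (Set.mem_univ i))
    have ht : (fun i => (t i : K)) = x := rfl
    have hm : (fun k => mon t (r k)) ∈ zeroSet K S₁ ∪ zeroSet K S₂ := h (by rw [hV]; exact ⟨t, rfl⟩)
    rw [map_mul, map_zero, ← ht]
    rcases hm with hm | hm
    · rw [e₁ t (hm p₁ hp₁), zero_mul]
    · rw [e₂ t (hm p₂ hp₂), mul_zero]

theorem closed_mon (D : Set (ι → ℤ)) : IsZClosed K {y : ι → Kˣ | ∀ c ∈ D, mon y c = 1} := by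
  refine ⟨{p | ∃ c ∈ D, p = (∏ i, MvPolynomial.X i ^ (c i).toNat) -
    ∏ i, MvPolynomial.X i ^ (-c i).toNat}, ?_⟩
  have key : ∀ (y : ι → Kˣ) (c : ι → ℤ), mon y c = 1 ↔
      MvPolynomial.eval (fun i => (y i : K)) ((∏ i, MvPolynomial.X i ^ (c i).toNat) -
        ∏ i, MvPolynomial.X i ^ (-c i).toNat) = 0 := by
    intro y c
    rw [map_sub, eval_natMon, eval_natMon, sub_eq_zero, Units.val_inj]
    have : (fun i => ((c i).toNat : ℤ)) = c + fun i => ((-c i).toNat : ℤ) := by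
      ext i; simp only [Pi.add_apply]; omega
    rw [this, mon_add]
    simp
  ext y
  constructor
  · rintro hy _ ⟨c, hc, rfl⟩
    exact (key y c).1 (hy c hc)
  · intro hy c hc
    exact (key y c).2 (hy _ ⟨c, hc, rfl⟩)

section Chain

variable (β : Module.Basis ι ℤ (ι → ℤ))

/-- Inverse coordinates for the basis `β`. -/
noncomputable def unpsi (t : ι → Kˣ) : ι → Kˣ := by
  classical exact fun k => mon t (β.repr (Pi.single k 1))

theorem mon_unpsi (t : ι → Kˣ) (c : ι → ℤ) : mon (unpsi β t) c = mon t (β.repr c) := by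
  classical
  have h : (⇑(β.repr c) : ι → ℤ) = ∑ k, c k • (⇑(β.repr (Pi.single k 1)) : ι → ℤ) := by
    have hc : c = ∑ k, c k • (Pi.single k 1 : ι → ℤ) := by
      ext i
      simp [Finset.sum_apply, Pi.single_apply]
    conv_lhs => rw [hc]
    ext i
    simp only [map_sum, map_smul, Finset.sum_apply, Finsupp.finsetSum_apply, Finsupp.smul_apply,
      Pi.smul_apply]
  rw [h, mon_sum]
  simp only [mon, unpsi]

theorem mon_unpsi_basis (t : ι → Kˣ) (i : ι) : mon (unpsi β t) (β i) = t i := by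
  classical
  rw [mon_unpsi, Module.Basis.repr_self, Finsupp.single_eq_pi_single, mon_single, zpow_one]

theorem unpsi_psi (y : ι → Kˣ) : unpsi β (fun i => mon y (β i)) = y := by
  classical
  ext1 k
  have : mon y (∑ i, β.repr (Pi.single k 1) i • β i) = y k := by
    rw [β.sum_repr, mon_single, zpow_one]
  rw [mon_sum] at this
  exact this

/-- Coordinate subtori with respect to `β`. -/
def coordT (S : Set ι) : Set (ι → Kˣ) := {y | ∀ i, i ∉ S → mon y (β i) = 1}

theorem coordT_irred [Infinite K] (S : Set ι) : IsIrredVar K (coordT (K := K) β S) := by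
  classical
  refine ⟨?_, ⟨1, fun i _ => by simp [mon]⟩, ?_⟩
  · have := closed_mon (K := K) (ι := ι) (β '' Sᶜ)
    convert this using 1
    ext y
    simp [coordT]
  · refine irred_image (fun k i => if i ∈ S then β.repr (Pi.single k 1) i else 0) _ ?_
    ext y
    constructor
    · intro hy
      refine ⟨fun i => mon y (β i), ?_⟩
      conv_rhs => rw [← unpsi_psi β y]
      ext1 k
      simp only [unpsi]
      rw [mon, mon]
      refine Finset.prod_congr rfl fun i _ => ?_
      by_cases hi : i ∈ S
      · simp [hi]
      · simp [hi, hy i hi]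
    · rintro ⟨t, rfl⟩ i hi
      have : (fun k => mon t (fun i => if i ∈ S then β.repr (Pi.single k 1) i else 0)) =
          unpsi β (fun i => if i ∈ S then t i else 1) := by
        ext1 k
        simp only [unpsi]
        rw [mon, mon]
        refine Finset.prod_congr rfl fun i _ => ?_
        by_cases hi : i ∈ S
        · simp [hi]
        · simp [hi]
      simp only [this, mon_unpsi_basis, hi, if_false]

theorem coordT_ssubset [CharZero K] {S S' : Set ι} (h : S ⊂ S') :
    coordT (K := K) β S ⊂ coordT β S' := by
  classical
  refine ⟨fun y hy i hi => hy i fun hi' => hi (h.1 hi'), fun hcon => ?_⟩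
  obtain ⟨j, hj', hj⟩ := Set.exists_of_ssubset h
  have h1 : unpsi β (Pi.mulSingle j (Units.mk0 (2 : K) two_ne_zero)) ∈ coordT β S' := by
    intro i hi
    rw [mon_unpsi_basis, Pi.mulSingle_eq_of_ne]
    rintro rfl
    exact hi hj'
  have h2 := hcon h1 j hj
  rw [mon_unpsi_basis, Pi.mulSingle_eq_same] at h2
  have h3 : (2 : K) = 1 := congrArg Units.val h2
  norm_num at h3

end Chain

theorem rank_le_of_vdim [CharZero K] {n : ℕ} (hn : n ≠ 0) (hcard : Fintype.card ι = n + n)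
    (N : Submodule ℤ (ι → ℤ)) (T : Set (ι → Kˣ))
    (hT : T = {y | ∀ c ∈ N, mon y c = 1}) (hd : vdim K T = n) : n ≤ Module.finrank ℤ N := by
  classical
  by_contra hlt
  push Not at hlt
  obtain ⟨s, β, bN, f, a, snf⟩ := N.smithNormalForm (Pi.basisFun ℤ ι)
  have hs : Module.finrank ℤ N = s := by simpa using Module.finrank_eq_card_basis bN
  have hsub : ∀ S : Set ι, (∀ i, f i ∉ S) → coordT (K := K) β S ⊆ T := by
    intro S hS y hy
    rw [hT]
    intro c hc
    have := bN.sum_repr ⟨c, hc⟩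
    have h2 : c = ∑ i, (bN.repr ⟨c, hc⟩ i * a i) • β (f i) := by
      have := congrArg Subtype.val this
      simp only [Submodule.coe_sum, Submodule.coe_smul, snf, smul_smul] at this
      exact this.symm
    rw [h2, mon_sum]
    refine Finset.prod_eq_one fun i _ => ?_
    rw [hy _ (hS i), one_zpow]
  let U : Finset ι := (Finset.univ.map f)ᶜ
  have hU : n + 1 ≤ U.card := by
    simp only [U, Finset.card_compl, Finset.card_map, Finset.card_univ, hcard, Fintype.card_fin]
    omega
  let h : Fin (n + 1) ↪ ι := (Fin.castLEEmb hU).trans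
    (U.equivFin.symm.toEmbedding.trans (Function.Embedding.subtype _))
  have hh : ∀ i, h i ∈ U := fun i => (U.equivFin.symm (Fin.castLEEmb hU i)).2
  let S : Fin (n + 1 + 1) → Set ι := fun j => h '' {i | i.val < j.val}
  have hSm : StrictMono S := by
    intro j j' hjj
    refine ⟨Set.image_mono fun i hi => show i.val < j'.val from lt_trans (show i.val < j.val from hi) hjj, fun hcon => ?_⟩
    have hj : j.val < n + 1 := by have := j'.2; have : j.val < j'.val := hjj; omega
    obtain ⟨i, hi, hij⟩ := hcon ⟨⟨j.val, hj⟩, hjj, rfl⟩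
    have := h.injective hij
    subst this
    exact lt_irrefl j.val hi
  have hmem : n + 1 ∈ {d | ∃ W : Fin (d + 1) → Set (ι → Kˣ),
      (∀ i, IsIrredVar K (W i) ∧ W i ⊆ T) ∧ StrictMono W} := by
    refine ⟨fun j => coordT β (S j), fun j => ⟨coordT_irred β _, hsub _ ?_⟩,
      fun j j' hjj => coordT_ssubset β (hSm hjj)⟩
    rintro i ⟨k, -, hk⟩
    have := hh k
    rw [hk] at this
    simp [U] at this
  rw [vdim] at hd
  by_cases hb : BddAbove {d | ∃ W : Fin (d + 1) → Set (ι → Kˣ),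
      (∀ i, IsIrredVar K (W i) ∧ W i ⊆ T) ∧ StrictMono W}
  · have := le_csSup hb hmem
    omega
  · rw [Nat.sSup_of_not_bddAbove hb] at hd
    exact hn hd.symm

theorem dep_of_lattice {n : ℕ} (N : Submodule ℤ (ι → ℤ))
    (π₁ π₂ : (ι → ℤ) →ₗ[ℤ] (Fin n → ℤ)) (hi₁ : ∀ m ∈ N, π₁ m = 0 → m = 0)
    (hi₂ : ∀ m ∈ N, π₂ m = 0 → m = 0) (hr : n ≤ Module.finrank ℤ N) (b b' : Fin n → Kˣ)
    (hrel : ∀ m ∈ N, mon b (π₁ m) * mon b' (π₂ m) = 1) :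
    ∃ d : ℕ, d ≠ 0 ∧ ∃ g : (Fin n → ℤ) →ₗ[ℤ] (Fin n → ℤ), Function.Injective g ∧
      ∀ c, mon b' c ^ d = mon b (g c) := by
  let φ := π₂.comp N.subtype
  have hφ : Function.Injective φ := by
    rw [injective_iff_map_eq_zero]
    intro m hm
    exact Subtype.ext (hi₂ m.1 m.2 hm)
  let e : N ≃ₗ[ℤ] LinearMap.range φ := LinearEquiv.ofInjective φ hφ
  have he : ∀ x, π₂ (e.symm x).1 = x.1 := fun x => by
    have := congrArg Subtype.val (e.apply_symm_apply x)
    exact this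
  have hfr : Module.finrank ℤ (LinearMap.range φ) = Module.finrank ℤ (Fin n → ℤ) := by
    apply le_antisymm (Submodule.finrank_le _)
    rw [← e.finrank_eq]
    simpa using hr
  have hfin : Finite ((Fin n → ℤ) ⧸ LinearMap.range φ) :=
    Submodule.finiteQuotientOfFreeOfRankEq _ hfr
  let d : ℕ := Nat.card ((Fin n → ℤ) ⧸ LinearMap.range φ)
  have hd : d ≠ 0 := Nat.card_pos.ne'
  have hmem : ∀ c : Fin n → ℤ, (d : ℤ) • c ∈ LinearMap.range φ := by
    intro c
    rw [← Submodule.Quotient.mk_eq_zero, Submodule.Quotient.mk_smul, natCast_zsmul]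
    exact card_nsmul_eq_zero'
  let g₀ : (Fin n → ℤ) →ₗ[ℤ] LinearMap.range φ :=
    LinearMap.codRestrict _ ((d : ℤ) • LinearMap.id) hmem
  let g₁ : (Fin n → ℤ) →ₗ[ℤ] (ι → ℤ) := N.subtype.comp (e.symm.toLinearMap.comp g₀)
  have hg₁ : ∀ c, g₁ c ∈ N := fun c => (e.symm (g₀ c)).2
  have hg₂ : ∀ c, π₂ (g₁ c) = (d : ℤ) • c := fun c => he (g₀ c)
  refine ⟨d, hd, -(π₁.comp g₁), ?_, fun c => ?_⟩
  · rw [injective_iff_map_eq_zero]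
    intro c hc
    have h1 : π₁ (g₁ c) = 0 := by simpa using hc
    have h2 := hg₂ c
    rw [hi₁ _ (hg₁ c) h1, map_zero] at h2
    have hd' : (d : ℤ) ≠ 0 := by exact_mod_cast hd
    exact (smul_eq_zero.1 h2.symm).resolve_left hd'
  · have h1 := hrel _ (hg₁ c)
    rw [hg₂, mon_smul, zpow_natCast] at h1
    have h2 : (-(π₁.comp g₁)) c = (-1 : ℤ) • π₁ (g₁ c) := by simp
    rw [h2, mon_smul, zpow_neg, zpow_one]
    exact eq_inv_of_mul_eq_one_right h1

theorem mem_divHull_of_pow (A : Set Kˣ) (x : Kˣ) (d : ℕ) (hd : d ≠ 0)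
    (h : x ^ d ∈ divHull K A) : x ∈ divHull K A := by
  obtain ⟨k, hk, hx⟩ := h
  exact ⟨d * k, mul_ne_zero hd hk, by rwa [pow_mul]⟩

theorem subset_divHull (A : Set Kˣ) : A ⊆ divHull K A := fun x hx =>
  ⟨1, one_ne_zero, by rw [pow_one]; exact Subgroup.subset_closure hx⟩

theorem divHull_le {A B : Set Kˣ} (h : A ⊆ divHull K B) : divHull K A ≤ divHull K B := by
  rintro x ⟨k, hk, hx⟩
  exact mem_divHull_of_pow B x k hk ((Subgroup.closure_le _).2 h hx)

variable {n : ℕ} {b b' : Fin n → Kˣ}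

theorem dep_coord (d : ℕ) (g : (Fin n → ℤ) → (Fin n → ℤ))
    (h : ∀ c, mon b' c ^ d = mon b (g c)) (i : Fin n) :
    ∃ c, b' i ^ d = mon b c := by
  refine ⟨g (Pi.single i 1), ?_⟩
  rw [← h, mon_single, zpow_one]

theorem dep_divHull (A : Set Kˣ) (d : ℕ) (hd : d ≠ 0)
    (h : ∀ i, ∃ c, b' i ^ d = mon b c) :
    divHull K (A ∪ Set.range b') ≤ divHull K (A ∪ Set.range b) := by
  apply divHull_le
  rintro x (hx | ⟨i, rfl⟩)
  · exact subset_divHull _ (Or.inl hx)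
  · obtain ⟨c, hc⟩ := h i
    apply mem_divHull_of_pow _ _ d hd
    rw [hc]
    exact Subgroup.prod_mem _ fun j _ =>
      Subgroup.zpow_mem _ (subset_divHull _ (Or.inr ⟨j, rfl⟩)) _

theorem dep_finrank (A : Set Kˣ) (d : ℕ) (g : (Fin n → ℤ) →ₗ[ℤ] (Fin n → ℤ))
    (hg : Function.Injective g) (h : ∀ c, mon b' c ^ d = mon b (g c)) :
    Module.finrank ℤ (relLattice K A b') ≤ Module.finrank ℤ (relLattice K A b) := by
  have hmem : ∀ c ∈ relLattice K A b', g c ∈ relLattice K A b := by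
    intro c hc
    change mon b (g c) ∈ divHull K A
    rw [← h]
    exact Subgroup.pow_mem _ hc d
  exact LinearMap.finrank_le_finrank_of_injective (f := g.restrict hmem)
    fun x y hxy => Subtype.ext (hg (congrArg Subtype.val hxy))

theorem dep_trdeg (F : Subfield K) (d : ℕ) (hd : d ≠ 0)
    (h : ∀ i, ∃ c, b i ^ d = mon b' c) :
    trdegOver K F (Set.range fun i => (b i : K)) ≤
      trdegOver K F (Set.range fun i => (b' i : K)) := by
  set s := Set.range fun i => (b i : K) with hs
  set s' := Set.range fun i => (b' i : K) with hs'
  have hsub : s ⊆ (AlgebraicIndependent.matroid F K).closure s' := by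
    rw [AlgebraicIndependent.matroid_closure_eq]
    rintro _ ⟨i, rfl⟩
    obtain ⟨c, hc⟩ := h i
    have hu : ∀ (j : Fin n), (b' j : K) ∈ Subalgebra.algebraicClosure (Algebra.adjoin F s') K := fun j =>
      isAlgebraic_algebraMap (⟨(b' j : K), Algebra.subset_adjoin ⟨j, rfl⟩⟩ : Algebra.adjoin F s')
    have hz : ∀ (j : Fin n) (m : ℤ), ((b' j ^ m : Kˣ) : K) ∈
        Subalgebra.algebraicClosure (Algebra.adjoin F s') K := by
      intro j m
      obtain ⟨k, rfl | rfl⟩ := m.eq_nat_or_neg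
      · rw [zpow_natCast, Units.val_pow_eq_pow_val]
        exact pow_mem (hu j) k
      · rw [zpow_neg, zpow_natCast, Units.val_inv_eq_inv_val, Units.val_pow_eq_pow_val]
        exact IsAlgebraic.inv (pow_mem (hu j) k)
    have hm : ((mon b' c : Kˣ) : K) ∈ Subalgebra.algebraicClosure (Algebra.adjoin F s') K := by
      rw [mon, Units.coe_prod]
      exact prod_mem fun j _ => hz j _
    rw [← hc, Units.val_pow_eq_pow_val] at hm
    exact IsAlgebraic.of_pow (Nat.pos_of_ne_zero hd) hm
  have hbdd : BddAbove {d | ∃ t : Finset K, ↑t ⊆ s' ∧ t.card = d ∧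
      AlgebraicIndependent F (fun x : {y : K // y ∈ t} => (x : K))} := by
    refine ⟨(Set.finite_range fun i => (b' i : K)).toFinset.card, ?_⟩
    rintro _ ⟨t, ht, rfl, -⟩
    exact Finset.card_le_card fun x hx => (Set.Finite.mem_toFinset _).2 (ht hx)
  have hfin' : s'.Finite := Set.finite_range _
  apply csSup_le
  · refine ⟨0, ∅, by simp, rfl, ?_⟩
    have : IsEmpty {y : K // y ∈ (∅ : Finset K)} := ⟨fun x => Finset.notMem_empty x.1 x.2⟩
    rw [algebraicIndependent_empty_type_iff]
    exact (algebraMap F K).injective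
  · rintro _ ⟨t, ht, rfl, hti⟩
    have hI : (AlgebraicIndependent.matroid F K).Indep (t : Set K) := hti
    obtain ⟨I, hI'⟩ := (AlgebraicIndependent.matroid F K).exists_isBasis s'
    have hle : (t : Set K).encard ≤ I.encard := by
      rw [← hI.eRk_eq_encard, ← hI'.eRk_eq_encard,
        ← (AlgebraicIndependent.matroid F K).eRk_closure_eq s']
      exact (AlgebraicIndependent.matroid F K).eRk_mono (ht.trans hsub)
    have hIf : I.Finite := hfin'.subset hI'.subset
    have hind : AlgebraicIndependent F (fun x : {y : K // y ∈ hIf.toFinset} => (x : K)) := by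
      have h1 : (AlgebraicIndependent.matroid F K).Indep ((hIf.toFinset : Finset K) : Set K) := by
        rw [hIf.coe_toFinset]; exact hI'.indep
      exact h1
    have h2 : t.card ≤ hIf.toFinset.card := by
      rw [← hIf.coe_toFinset, Set.encard_coe_eq_coe_finsetCard,
        Set.encard_coe_eq_coe_finsetCard] at hle
      exact_mod_cast hle
    refine h2.trans (le_csSup hbdd ⟨hIf.toFinset, ?_, rfl, hind⟩)
    rw [hIf.coe_toFinset]
    exact hI'.subset

theorem two_zpow [CharZero K] (m : ℤ) (h : (Units.mk0 (2 : K) two_ne_zero) ^ m = 1) : m = 0 := by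
  have h1 : ((2 : ℚ) ^ m : ℚ) = 1 := by
    have := congrArg Units.val h
    simp only [Units.val_zpow_eq_zpow_val, Units.val_mk0, Units.val_one] at this
    have h2 : (((2 : ℚ) ^ m : ℚ) : K) = ((1 : ℚ) : K) := by
      push_cast
      exact this
    exact Rat.cast_injective h2
  exact (zpow_eq_one_iff_right₀ (by norm_num) (by norm_num)).1 h1

theorem eq_zero_of_mon [CharZero K] (c : ι → ℤ) (h : ∀ y : ι → Kˣ, mon y c = 1) : c = 0 := by
  classical
  ext i
  have := h (Pi.mulSingle i (Units.mk0 (2 : K) two_ne_zero))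
  rw [mon_mulSingle] at this
  exact two_zpow _ this

theorem mon_sumElim (x y : Fin n → Kˣ) (m : Fin n ⊕ Fin n → ℤ) :
    mon (Sum.elim x y) m = mon x (m ∘ Sum.inl) * mon y (m ∘ Sum.inr) := by
  simp [mon, Fintype.prod_sum_type]

theorem minPrealg_aux (K : Type) [Field K] [CharZero K]
    (A : Set Kˣ) {n : ℕ} (b : Fin n → Kˣ) (hb : MinPrealg K A b)
    (T : Set ((Fin n ⊕ Fin n) → Kˣ)) (hT : IsCorrTorus K T)
    (b' : Fin n → Kˣ) (hbb' : Sum.elim b b' ∈ T) :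
    divHull K (A ∪ Set.range b') = divHull K (A ∪ Set.range b) ∧ MinPrealg K A b' := by
  obtain ⟨hn, hl, hp, hmin⟩ := hb
  obtain ⟨⟨⟨k, M, hM⟩, -⟩, hdim, hs₁, hs₂⟩ := hT
  let N : Submodule ℤ (Fin n ⊕ Fin n → ℤ) := Submodule.span ℤ (Set.range M)
  have hTN : T = {y | ∀ c ∈ N, mon y c = 1} := by
    rw [hM]
    ext y
    constructor
    · intro hy c hc
      induction hc using Submodule.span_induction with
      | mem x hx =>
        obtain ⟨j, rfl⟩ := hx
        exact congrFun hy j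
      | zero => exact mon_zero y
      | add x z _ _ hx hz => rw [mon_add, hx, hz, mul_one]
      | smul a x _ hx => rw [mon_smul, hx, one_zpow]
    · intro hy
      ext1 j
      exact hy _ (Submodule.subset_span ⟨j, rfl⟩)
  have hr : n ≤ Module.finrank ℤ N :=
    rank_le_of_vdim (by omega) (by simp) N T hTN hdim
  let π₁ : (Fin n ⊕ Fin n → ℤ) →ₗ[ℤ] (Fin n → ℤ) := LinearMap.funLeft ℤ ℤ Sum.inl
  let π₂ : (Fin n ⊕ Fin n → ℤ) →ₗ[ℤ] (Fin n → ℤ) := LinearMap.funLeft ℤ ℤ Sum.inr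
  have hrel : ∀ x y, Sum.elim x y ∈ T → ∀ m ∈ N, mon x (π₁ m) * mon y (π₂ m) = 1 := by
    intro x y hxy m hm
    rw [hTN] at hxy
    have := hxy m hm
    rwa [mon_sumElim] at this
  have hzero : ∀ m, π₁ m = 0 → π₂ m = 0 → m = 0 := by
    intro m h1 h2
    ext (i | i)
    · exact congrFun h1 i
    · exact congrFun h2 i
  have hi₁ : ∀ m ∈ N, π₁ m = 0 → m = 0 := by
    intro m hm h1
    refine hzero m h1 (eq_zero_of_mon (K := K) _ fun y => ?_)
    obtain ⟨x, hx⟩ := hs₂ y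
    have := hrel x y hx m hm
    rwa [h1, mon_zero, one_mul] at this
  have hi₂ : ∀ m ∈ N, π₂ m = 0 → m = 0 := by
    intro m hm h1
    refine hzero m (eq_zero_of_mon (K := K) _ fun x => ?_) h1
    obtain ⟨y, hy⟩ := hs₁ x
    have := hrel x y hy m hm
    rwa [h1, mon_zero, mul_one] at this
  obtain ⟨d, hd, g, hg, hdg⟩ := dep_of_lattice N π₁ π₂ hi₁ hi₂ hr b b' (hrel b b' hbb')
  obtain ⟨d', hd', g', hg', hdg'⟩ := dep_of_lattice N π₂ π₁ hi₂ hi₁ hr b' b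
    (fun m hm => by rw [mul_comm]; exact hrel b b' hbb' m hm)
  have hc := dep_coord d g hdg
  have hc' := dep_coord d' g' hdg'
  have hhull : divHull K (A ∪ Set.range b') = divHull K (A ∪ Set.range b) :=
    le_antisymm (dep_divHull A d hd hc) (dep_divHull A d' hd' hc')
  have hldim : ∀ B : Set Kˣ, ldimRel K B b' = ldimRel K B b := fun B => by
    rw [ldimRel, ldimRel, le_antisymm (dep_finrank B d g hg hdg) (dep_finrank B d' g' hg' hdg')]
  have htr : ∀ B : Set Kˣ, trdegRel K B b' = trdegRel K B b := fun B =>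
    le_antisymm (dep_trdeg _ d hd hc) (dep_trdeg _ d' hd' hc')
  have hpd : ∀ B : Set Kˣ, pdelta K B b' = pdelta K B b := fun B => by
    rw [pdelta, pdelta, hldim, htr]
  refine ⟨hhull, hn, by rw [hldim, hl], by rw [hpd, hp], fun B' h1 h2 h3 => ?_⟩
  rw [hpd]
  rw [hhull] at h3
  exact hmin B' h1 h2 h3

end Helpers

/-- Minimal prealgebraic extensions are preserved under toric
correspondences: if `⟨A ∪ b⟩/A` is minimal prealgebraic of length `n`, `T` is a
correspondence torus and `(b, b') ∈ T`, then `⟨A ∪ b'⟩ = ⟨A ∪ b⟩` and `⟨A ∪ b'⟩/A` is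
minimal prealgebraic of length `n`. -/
theorem minPrealg_of_corrTorus
    (K : Type) [Field K] [IsAlgClosed K] [CharZero K]
    (A : Set Kˣ) (hA : A = ↑(divHull K A))
    {n : ℕ} (b : Fin n → Kˣ) (hb : MinPrealg K A b)
    (T : Set ((Fin n ⊕ Fin n) → Kˣ)) (hT : IsCorrTorus K T)
    (b' : Fin n → Kˣ) (hbb' : Sum.elim b b' ∈ T) :
    divHull K (A ∪ Set.range b') = divHull K (A ∪ Set.range b) ∧ MinPrealg K A b' := by
  exact minPrealg_aux K A b hb T hT b' hbb'

end BadFields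
end
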